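/- arXiv:1703.07147 — 2 statements merged into one kernel-verified Lean document; each statement's English description precedes it below -/
import Mathlib

section
/- Let T₁, T₂ be ℂ-linear triangulated categories of finite type with split-generators G₁, G₂ respectively, and F_i a triangulated endofunctor of T_i with F_iⁿG_i ≇ 0 for all n ≥ 0 (i = 1, 2). If there exists a fully faithful triangulated functor F': T₂ → T₁ admitting both a left and a right adjoint such that F'F₂ ≅ F₁F', then h_t(F₂) ≤ h_t(F₁) for all t ∈ ℝ. -/
/-! In place of the octahedral axiom, which a pretriangulated category need not satisfy, a version
up to direct summands is enough. When all spaces `Hom(X, Y)` are finite-dimensional and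
`Hom(X, Y⟦n⟧)` vanishes for large `n`, two objects `Z`, `W` with `dim Hom(Z, T) = dim Hom(W, T)`
for all `T` are retracts of one another: equality of these dimensions forces nonzero morphisms
`Z ⟶ W ⟶ Z` with non-nilpotent composite, these split off a common summand, and one repeats on the
complements. The objects that the octahedral axiom would identify have equal dimensions by
exactness of `Hom(-, T)`, and complexity is insensitive to retracts. Hence
`δ(M, X) ≤ δ(M, N) δ(N, X)`, while `δ(F M, F X) ≤ δ(M, X)` for triangulated `F`.

If `R` is right adjoint to `F'`, then `F₂ᵐ G₂ ≅ R F' F₂ᵐ G₂ ≅ R F₁ᵐ F' G₂` because `F'` is fully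
faithful, so `δ(G₂, F₂ᵐ G₂) ≤ δ(G₂, R G₁) δ(G₁, F₁ᵐ G₁) δ(G₁, F' G₂)`. The outer factors do not
depend on `m` and disappear in the growth rate.
-/

open CategoryTheory Limits Pretriangulated Filter
open scoped ENNReal

universe u v u₂ v₂

namespace CatEntropy

section Defs

variable (C : Type u) [Category.{v} C] [Preadditive C] [HasZeroObject C]
  [HasShift C ℤ] [∀ n : ℤ, (shiftFunctor C n).Additive] [Pretriangulated C]

/-- `C` is of finite type: for all objects `M, N`, the total dimension
`Σ_{n ∈ ℤ} dim_ℂ Hom(M, N⟦n⟧)` is finite. -/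
def IsFiniteType [Linear ℂ C] : Prop :=
  ∀ M N : C, {n : ℤ | ¬ Subsingleton (M ⟶ N⟦n⟧)}.Finite ∧
    ∀ n : ℤ, FiniteDimensional ℂ (M ⟶ N⟦n⟧)

/-- A set of objects is a thick triangulated subcategory: closed under isomorphisms,
shifts, cones and direct summands. -/
structure IsThick (S : Set C) : Prop where
  mem_of_iso : ∀ {X Y : C}, (X ≅ Y) → X ∈ S → Y ∈ S
  shift_mem : ∀ (X : C) (n : ℤ), X ∈ S → X⟦n⟧ ∈ S
  cone_mem : ∀ (T : Triangle C), T ∈ (distTriang C) → T.obj₁ ∈ S → T.obj₂ ∈ S → T.obj₃ ∈ S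
  summand_mem : ∀ (X Y : C), (X ⊞ Y) ∈ S → X ∈ S

/-- `⟨M⟩`, the smallest thick triangulated subcategory containing `M`. -/
def thickClosure (M : C) : Set C :=
  ⋂₀ {S : Set C | IsThick C S ∧ M ∈ S}

/-- `G` is a split-generator of `C` if `⟨G⟩ = C`. -/
def IsSplitGenerator (G : C) : Prop := ∀ X : C, X ∈ thickClosure C G

open Classical in
/-- The complexity `δ_{C,t}(M, N)` of `N` with respect to `M`. -/
noncomputable def complexity (t : ℝ) (M N : C) : ℝ≥0∞ :=
  if IsZero N then 0
  else if N ∈ thickClosure C M then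
    sInf {c : ℝ≥0∞ |
      ∃ (p : ℕ) (_ : 0 < p) (n : Fin p → ℤ) (A : Fin (p + 1) → C) (N' : C),
        IsZero (A 0) ∧ Nonempty (A (Fin.last p) ≅ N ⊞ N') ∧
        (∀ i : Fin p,
          ∃ (f : A i.castSucc ⟶ A i.succ) (g : A i.succ ⟶ M⟦n i⟧)
            (h : M⟦n i⟧ ⟶ (A i.castSucc)⟦(1 : ℤ)⟧),
              Triangle.mk f g h ∈ (distTriang C)) ∧
        c = ∑ i : Fin p, ENNReal.ofReal (Real.exp ((n i : ℝ) * t))}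
  else ⊤

/-- Iterated composition `Fⁿ` of an endofunctor. -/
def iter (F : C ⥤ C) : ℕ → C ⥤ C
  | 0 => 𝟭 C
  | n + 1 => iter F n ⋙ F

/-- The entropy `h_t(F)` of an endofunctor `F`, computed with the split-generator `G`
(the defining limit exists and agrees with the `limsup` used here). -/
noncomputable def entropy (F : C ⥤ C) (G : C) (t : ℝ) : EReal :=
  Filter.atTop.limsup fun m : ℕ =>
    (((m : ℝ)⁻¹ : ℝ) : EReal) * (complexity C t G ((iter C F m).obj G)).log

end Defs

section Algebra

lemma eq_zero_of_isIdempotentElem_of_isNilpotent_mul {A ι : Type*} [Ring A] [Fintype ι] {e : A}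
    (he : IsIdempotentElem e) (a : ι → A) (ha : ∀ i b, IsNilpotent (b * a i))
    (hsum : e = ∑ i, a i) : e = 0 := by
  have hmem : e ∈ (Ideal.jacobson (⊥ : Ideal A)) := by
    rw [hsum]
    refine Ideal.sum_mem _ fun i _ => Ideal.mem_jacobson_iff.2 fun b => ?_
    obtain ⟨z, hz⟩ := (ha i b).isUnit_one_add.exists_left_inv
    exact ⟨z, by rw [Submodule.mem_bot, mul_assoc, ← hz]; noncomm_ring⟩
  obtain ⟨z, hz⟩ := Ideal.mem_jacobson_iff.1 hmem (-1)
  have hz' : z * (1 - e) = 1 := by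
    rw [Submodule.mem_bot] at hz
    rw [← sub_eq_zero, ← hz]; noncomm_ring
  calc e = z * (1 - e) * e := by rw [hz', one_mul]
    _ = 0 := by rw [mul_assoc, sub_mul, one_mul, he.eq, sub_self, mul_zero]

variable (K : Type*) [Field K]

lemma exists_commute_pow_succ_mul_eq {A : Type*} [Ring A] [Algebra K A] [FiniteDimensional K A]
    (a : A) : ∃ (n : ℕ) (b : A), Commute a b ∧ a ^ (n + 1) * b = a ^ n := by
  let S := Algebra.adjoin K {a}
  have : IsArtinian S S := isArtinian_of_tower K inferInstance
  obtain ⟨n, b, hb⟩ := IsArtinian.exists_pow_succ_smul_dvd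
    (⟨a, Algebra.self_mem_adjoin_singleton K a⟩ : S) (1 : S)
  refine ⟨n, b, Algebra.commute_of_mem_adjoin_self b.2, ?_⟩
  simpa using congrArg Subtype.val hb

lemma exists_isIdempotentElem_eq_mul_of_not_isNilpotent {A : Type*} [Ring A] [Algebra K A]
    [FiniteDimensional K A] {a : A} (ha : ¬ IsNilpotent a) :
    ∃ e b : A, e ≠ 0 ∧ IsIdempotentElem e ∧ e = a * b ∧ Commute a b := by
  obtain ⟨n, b, hab, hn⟩ := exists_commute_pow_succ_mul_eq K a
  have hn' : a ^ n * (a * b) = a ^ n := by rw [← mul_assoc, ← pow_succ, hn]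
  have hpow : ∀ k : ℕ, a ^ n * (a * b) ^ k = a ^ n := fun k => by
    induction k with
    | zero => simp
    | succ k ih => rw [pow_succ, ← mul_assoc, ih, hn']
  have habs : ∀ k : ℕ, (a * b) ^ n * (a * b) ^ k = (a * b) ^ n := fun k => by
    rw [hab.mul_pow, (hab.pow_pow n n).eq, mul_assoc, hpow]
  refine ⟨(a * b) ^ n, b * (a * b) ^ n, fun h => ha ⟨n, ?_⟩, habs n, ?_, ?_⟩
  · rw [← hpow n, h, mul_zero]
  · rw [← mul_assoc, ← pow_succ', pow_succ, ← pow_one (a * b), ← pow_mul, one_mul, habs]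
  · exact hab.mul_right (((Commute.refl a).mul_right hab).pow_right n)

end Algebra

lemma finrank_eq_map_add_inf_ker {K V X : Type*} [Field K] [AddCommGroup V] [Module K V]
    [AddCommGroup X] [Module K X] [FiniteDimensional K V] (P : Submodule K V) (v : V →ₗ[K] X) :
    Module.finrank K P = Module.finrank K (P.map v) +
      Module.finrank K (P ⊓ LinearMap.ker v : Submodule K V) := by
  have h := LinearMap.finrank_range_add_finrank_ker (v.domRestrict P)
  rw [LinearMap.range_domRestrict] at h
  rw [← h, ← Submodule.finrank_map_subtype_eq P (LinearMap.ker (v.domRestrict P)),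
    LinearMap.ker_domRestrict, Submodule.map_comap_subtype]

/-- The morphisms in question are those of the commutative diagram
```
S ―e→ A₁ ―a→ A ―k→ N₁
‖     ↓g     ↓f    ‖
S ―d→ M  ―p→ N ―i→ N₁
```
with exact parts `A₁ → A → N₁` and `S → M → N`. -/
lemma finrank_range_add_finrank_range_eq {K S A₁ A M N N₁ : Type*} [Field K]
    [AddCommGroup S] [Module K S] [AddCommGroup A₁] [Module K A₁] [AddCommGroup A] [Module K A]
    [AddCommGroup M] [Module K M] [AddCommGroup N] [Module K N] [AddCommGroup N₁] [Module K N₁]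
    [FiniteDimensional K M] [FiniteDimensional K N]
    {e : S →ₗ[K] A₁} {a : A₁ →ₗ[K] A} {k : A →ₗ[K] N₁}
    {d : S →ₗ[K] M} {p : M →ₗ[K] N} {i : N →ₗ[K] N₁} {g : A₁ →ₗ[K] M} {f : A →ₗ[K] N}
    (hd : g ∘ₗ e = d) (hp : p ∘ₗ g = f ∘ₗ a) (hk : i ∘ₗ f = k)
    (hA : Function.Exact a k) (hM : Function.Exact d p) :
    Module.finrank K g.range + Module.finrank K k.range =
      Module.finrank K d.range + Module.finrank K f.range := by
  have hker : g.range ⊓ p.ker = d.range := by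
    rw [hM.linearMap_ker_eq, inf_eq_right, ← hd]
    exact LinearMap.range_comp_le_range e g
  have himage : g.range.map p = f.range ⊓ i.ker := by
    rw [← LinearMap.range_comp, hp, LinearMap.range_comp, ← hA.linearMap_ker_eq, ← hk,
      LinearMap.ker_comp, Submodule.map_comap_eq]
  have hg := finrank_eq_map_add_inf_ker g.range p
  have hf := finrank_eq_map_add_inf_ker f.range i
  rw [himage, hker] at hg
  rw [← LinearMap.range_comp, hk] at hf
  lia

section PartialIso

/-- An isomorphism between a (possibly only virtual) direct summand of `Z` and one of `W`: the
idempotents `hom ≫ inv` and `inv ≫ hom` cut out the two summands. -/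
structure PartialIso {C : Type*} [Category* C] (Z W : C) where
  hom : Z ⟶ W
  inv : W ⟶ Z
  hom_inv_hom : hom ≫ inv ≫ hom = hom
  inv_hom_inv : inv ≫ hom ≫ inv = inv

namespace PartialIso

variable {C : Type*} [Category* C] {Z W : C}

attribute [simp] hom_inv_hom inv_hom_inv

/-- The inverse partial isomorphism. -/
def symm (f : PartialIso Z W) : PartialIso W Z := ⟨f.inv, f.hom, f.inv_hom_inv, f.hom_inv_hom⟩

/-- The idempotent of `Z` cutting out the source of `f`. -/
def source (f : PartialIso Z W) : Z ⟶ Z := f.hom ≫ f.inv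

/-- The idempotent of `W` cutting out the target of `f`. -/
def target (f : PartialIso Z W) : W ⟶ W := f.inv ≫ f.hom

lemma source_comp_source (f : PartialIso Z W) : f.source ≫ f.source = f.source := by
  simp [source]

lemma target_comp_target (f : PartialIso Z W) : f.target ≫ f.target = f.target :=
  f.symm.source_comp_source

@[simp]
lemma inv_comp_source (f : PartialIso Z W) : f.inv ≫ f.source = f.inv := f.inv_hom_inv

@[simp]
lemma target_comp_inv (f : PartialIso Z W) : f.target ≫ f.inv = f.inv := by
  simp [target]

/-- The source of `f` lies in the summand of `Z` cut out by `p`, and its target in the summand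
of `W` cut out by `q`. -/
structure Within (f : PartialIso Z W) (p : Z ⟶ Z) (q : W ⟶ W) : Prop where
  comp_hom : p ≫ f.hom = f.hom
  hom_comp : f.hom ≫ q = f.hom
  comp_inv : q ≫ f.inv = f.inv
  inv_comp : f.inv ≫ p = f.inv

lemma Within.symm {f : PartialIso Z W} {p : Z ⟶ Z} {q : W ⟶ W} (h : f.Within p q) :
    f.symm.Within q p :=
  ⟨h.comp_inv, h.inv_comp, h.comp_hom, h.hom_comp⟩

variable [Preadditive C]

lemma Within.inv_comp_hom_eq_zero {f g : PartialIso Z W}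
    (h : g.Within (𝟙 Z - f.source) (𝟙 W - f.target)) : f.inv ≫ g.hom = 0 := by
  rw [← h.comp_hom, ← Category.assoc, Preadditive.comp_sub, inv_comp_source]
  simp

lemma Within.hom_comp_inv_eq_zero {f g : PartialIso Z W}
    (h : g.Within (𝟙 Z - f.source) (𝟙 W - f.target)) : g.hom ≫ f.inv = 0 := by
  rw [← h.hom_comp, Category.assoc, Preadditive.sub_comp, target_comp_inv]
  simp

/-- The sum of two partial isomorphisms with complementary sources and complementary targets. -/
@[simps]
def add (f g : PartialIso Z W) (h : g.Within (𝟙 Z - f.source) (𝟙 W - f.target)) :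
    PartialIso Z W where
  hom := f.hom + g.hom
  inv := f.inv + g.inv
  hom_inv_hom := by
    have h₁ : f.hom ≫ g.inv = 0 := Within.inv_comp_hom_eq_zero (f := f.symm) h.symm
    have h₂ : g.inv ≫ f.hom = 0 := Within.hom_comp_inv_eq_zero (f := f.symm) h.symm
    simp [h₂, reassoc_of% h₁, h.inv_comp_hom_eq_zero, reassoc_of% h.hom_comp_inv_eq_zero]
  inv_hom_inv := by
    have h₁ : f.hom ≫ g.inv = 0 := Within.inv_comp_hom_eq_zero (f := f.symm) h.symm
    have h₂ : g.inv ≫ f.hom = 0 := Within.hom_comp_inv_eq_zero (f := f.symm) h.symm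
    simp [h₁, reassoc_of% h₂, h.hom_comp_inv_eq_zero, reassoc_of% h.inv_comp_hom_eq_zero]

lemma source_add (f g : PartialIso Z W) (h : g.Within (𝟙 Z - f.source) (𝟙 W - f.target)) :
    (f.add g h).source = f.source + g.source := by
  have h₁ : f.hom ≫ g.inv = 0 := Within.inv_comp_hom_eq_zero (f := f.symm) h.symm
  simp [source, h₁, h.hom_comp_inv_eq_zero]

lemma source_comp_source_add (f g : PartialIso Z W)
    (h : g.Within (𝟙 Z - f.source) (𝟙 W - f.target)) :
    f.source ≫ (f.add g h).source = f.source := by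
  rw [source_add, Preadditive.comp_add, source_comp_source]
  simp [source, reassoc_of% h.inv_comp_hom_eq_zero]

lemma source_add_comp_source (f g : PartialIso Z W)
    (h : g.Within (𝟙 Z - f.source) (𝟙 W - f.target)) :
    (f.add g h).source ≫ f.source = f.source := by
  have h₁ : g.inv ≫ f.hom = 0 := Within.hom_comp_inv_eq_zero (f := f.symm) h.symm
  rw [source_add, Preadditive.add_comp, source_comp_source]
  simp [source, reassoc_of% h₁]

lemma exists_hom_ne_zero_within {K : Type*} [Field K] [Linear K C]
    [FiniteDimensional K (Z ⟶ Z)] {p : Z ⟶ Z} {q : W ⟶ W} (hp : p ≫ p = p) (hq : q ≫ q = q)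
    {x : Z ⟶ W} {y : W ⟶ Z} (hpx : p ≫ x = x) (hxq : x ≫ q = x)
    (hxy : ¬ IsNilpotent (R := End Z) (x ≫ y)) :
    ∃ f : PartialIso Z W, f.hom ≠ 0 ∧ f.Within p q := by
  have : FiniteDimensional K (End Z) := ‹FiniteDimensional K (Z ⟶ Z)›
  obtain ⟨e : Z ⟶ Z, s : Z ⟶ Z, he₀, hee, hes, hcomm⟩ :=
    exists_isIdempotentElem_eq_mul_of_not_isNilpotent K hxy
  replace hee : e ≫ e = e := hee
  replace hes : e = x ≫ y ≫ s := by simpa [End.mul_def] using hes.trans hcomm.eq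
  have hpe : p ≫ e = e := by rw [hes, reassoc_of% hpx]
  have heye : e ≫ x ≫ y ≫ s ≫ e = e := by
    have h := congrArg (fun k => e ≫ k ≫ e) hes
    simpa only [hee, Category.assoc] using h.symm
  refine ⟨⟨e ≫ x, q ≫ y ≫ s ≫ e ≫ p, ?_, ?_⟩, fun h => he₀ ?_, ?_, ?_, ?_, ?_⟩
  · simp only [Category.assoc, reassoc_of% hxq, reassoc_of% hpe, reassoc_of% hee, reassoc_of% heye]
  · simp only [Category.assoc, reassoc_of% hxq, reassoc_of% hpe, reassoc_of% hee, reassoc_of% heye]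
  · rw [← heye, reassoc_of% h, zero_comp]
  · simp only [reassoc_of% hpe]
  · simp only [Category.assoc, hxq]
  · simp only [reassoc_of% hq]
  · simp only [Category.assoc, hp]

end PartialIso
end PartialIso

section HomRank

variable (K : Type*) [Field K] {C : Type u} [Category.{v} C] [Preadditive C] [Linear K C]

/-- The rank of the linear map `f ↦ u ≫ f ≫ w` on the space of morphisms from the target of `u`
to the source of `w`. -/
noncomputable def homRank {X' X Y Y' : C} (u : X' ⟶ X) (w : Y ⟶ Y') : ℕ :=
  Module.finrank K (Linear.rightComp K X' w ∘ₗ Linear.leftComp K Y u).range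

lemma homRank_id_right {X' X : C} (u : X' ⟶ X) (Y : C) :
    homRank K u (𝟙 Y) = Module.finrank K (Linear.leftComp K Y u).range := by
  have h : Linear.rightComp K X' (𝟙 Y) = LinearMap.id := by ext; simp
  rw [homRank, h, LinearMap.id_comp]

lemma homRank_neg_left {X' X Y Y' : C} (u : X' ⟶ X) (w : Y ⟶ Y') :
    homRank K (-u) w = homRank K u w := by
  have h : Linear.leftComp K Y (-u) = -Linear.leftComp K Y u := by ext; simp
  rw [homRank, h, LinearMap.comp_neg, LinearMap.range_neg, homRank]

lemma homRank_neg_right {X' X Y Y' : C} (u : X' ⟶ X) (w : Y ⟶ Y') :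
    homRank K u (-w) = homRank K u w := by
  have h : Linear.rightComp K X' (-w) = -Linear.rightComp K X' w := by ext; simp
  rw [homRank, h, LinearMap.neg_comp, LinearMap.range_neg, homRank]

variable {K} in
lemma homRank_eq_zero_iff {X' X Y Y' : C} [FiniteDimensional K (X' ⟶ Y')] {u : X' ⟶ X}
    {w : Y ⟶ Y'} : homRank K u w = 0 ↔ ∀ f : X ⟶ Y, u ≫ f ≫ w = 0 := by
  rw [homRank, Submodule.finrank_eq_zero, LinearMap.range_eq_bot, LinearMap.ext_iff]
  simp

lemma homRank_comp_le_left {X' X Z Y : C} [FiniteDimensional K (X' ⟶ Y)] (u : X' ⟶ X)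
    (v : X ⟶ Z) : homRank K (u ≫ v) (𝟙 Y) ≤ homRank K u (𝟙 Y) := by
  rw [homRank_id_right, homRank_id_right]
  refine Submodule.finrank_mono ?_
  rintro _ ⟨f, rfl⟩
  exact ⟨v ≫ f, by simp⟩

lemma homRank_comp_le_right {X' X Z Y : C} [FiniteDimensional K (X ⟶ Y)] (u : X' ⟶ X)
    (v : X ⟶ Z) : homRank K (u ≫ v) (𝟙 Y) ≤ homRank K v (𝟙 Y) := by
  have h : Linear.leftComp K Y (u ≫ v) = Linear.leftComp K Y u ∘ₗ Linear.leftComp K Y v := by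
    ext; simp
  rw [homRank_id_right, homRank_id_right, h, LinearMap.range_comp]
  exact Submodule.finrank_map_le _ _

lemma finrank_hom_eq_homRank_add_homRank_compl {X : C} {p : X ⟶ X} (hp : p ≫ p = p) (Y : C)
    [FiniteDimensional K (X ⟶ Y)] :
    Module.finrank K (X ⟶ Y) = homRank K p (𝟙 Y) + homRank K (𝟙 X - p) (𝟙 Y) := by
  have hker : (Linear.leftComp K Y p).ker = (Linear.leftComp K Y (𝟙 X - p)).range := by
    ext f
    refine ⟨fun hf => ⟨f, ?_⟩, ?_⟩
    · have hf : p ≫ f = 0 := hf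
      simp [hf]
    · rintro ⟨g, rfl⟩
      simp [reassoc_of% hp]
  rw [homRank_id_right, homRank_id_right, ← hker, LinearMap.finrank_range_add_finrank_ker]

lemma PartialIso.homRank_source_le {Z W : C} (f : PartialIso Z W) (Y : C)
    [FiniteDimensional K (W ⟶ Y)] :
    homRank K f.source (𝟙 Y) ≤ homRank K f.target (𝟙 Y) :=
  calc homRank K f.source (𝟙 Y) ≤ homRank K f.inv (𝟙 Y) := homRank_comp_le_right K f.hom f.inv
    _ = homRank K (f.target ≫ f.inv) (𝟙 Y) := by rw [target_comp_inv]
    _ ≤ homRank K f.target (𝟙 Y) := homRank_comp_le_left K _ _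

lemma PartialIso.homRank_source_eq {Z W : C} (f : PartialIso Z W) (Y : C)
    [FiniteDimensional K (Z ⟶ Y)] [FiniteDimensional K (W ⟶ Y)] :
    homRank K f.source (𝟙 Y) = homRank K f.target (𝟙 Y) :=
  (f.homRank_source_le K Y).antisymm (f.symm.homRank_source_le K Y)

lemma PartialIso.homRank_compl_source_eq {Z W : C} (f : PartialIso Z W)
    (hdim : ∀ T : C, Module.finrank K (Z ⟶ T) = Module.finrank K (W ⟶ T)) (Y : C)
    [FiniteDimensional K (Z ⟶ Y)] [FiniteDimensional K (W ⟶ Y)] :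
    homRank K (𝟙 Z - f.source) (𝟙 Y) = homRank K (𝟙 W - f.target) (𝟙 Y) := by
  have hZ := finrank_hom_eq_homRank_add_homRank_compl K f.source_comp_source Y
  have hW := finrank_hom_eq_homRank_add_homRank_compl K f.target_comp_target Y
  have := f.homRank_source_eq K Y
  have := hdim Y
  lia

lemma PartialIso.range_leftComp_source_lt_range_leftComp_source_add {Z W : C}
    (f : PartialIso Z W) {g : PartialIso Z W} (h : g.Within (𝟙 Z - f.source) (𝟙 W - f.target))
    (hg : g.hom ≠ 0) : (Linear.leftComp K Z f.source).range <
      (Linear.leftComp K Z (f.add g h).source).range := by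
  refine lt_of_le_of_ne ?_ fun heq => hg ?_
  · rintro _ ⟨u, rfl⟩
    exact ⟨f.source ≫ u, by simp [reassoc_of% f.source_add_comp_source g h]⟩
  · obtain ⟨u, hu⟩ : (f.add g h).source ∈ (Linear.leftComp K Z f.source).range :=
      heq ▸ ⟨𝟙 Z, by simp⟩
    have hu : f.source ≫ u = (f.add g h).source := hu
    have hsource : f.source = f.source + g.source :=
      calc f.source = f.source ≫ f.source ≫ u := by rw [hu, f.source_comp_source_add g h]
        _ = f.source + g.source := by
          rw [reassoc_of% f.source_comp_source, hu, f.source_add g h]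
    rw [← g.hom_inv_hom, ← Category.assoc]
    change g.source ≫ g.hom = 0
    rw [left_eq_add.1 hsource, zero_comp]

variable {K} in
lemma homRank_add_homRank_comp {N₁ N M S A A₁ T : C} {i : N₁ ⟶ N} {p : N ⟶ M} {d : M ⟶ S}
    {f : N ⟶ A} {a : A ⟶ A₁} {e : A₁ ⟶ S} {g : M ⟶ A₁} (hpg : p ≫ g = f ≫ a) (hge : g ≫ e = d)
    (hA : Function.Exact (Linear.leftComp K T a) (Linear.leftComp K T (i ≫ f)))
    (hM : Function.Exact (Linear.leftComp K T d) (Linear.leftComp K T p))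
    [FiniteDimensional K (M ⟶ T)] [FiniteDimensional K (N ⟶ T)] :
    homRank K g (𝟙 T) + homRank K (i ≫ f) (𝟙 T) = homRank K d (𝟙 T) + homRank K f (𝟙 T) := by
  simp only [homRank_id_right]
  refine finrank_range_add_finrank_range_eq (e := Linear.leftComp K T e)
    (i := Linear.leftComp K T i) ?_ ?_ ?_ hA hM
  · ext u; simp [← hge]
  · ext u; simp [reassoc_of% hpg]
  · ext u; simp

end HomRank

section Triangulated

/-- Morphism spaces are finite-dimensional, and `Hom(X, Y⟦n⟧)` vanishes for `n` large. It is
implied by the finite type condition, and it suffices for comparing objects by the dimensions of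
their morphism spaces. -/
structure IsHomFiniteAbove (K : Type*) [Field K] (C : Type u) [Category.{v} C] [Preadditive C]
    [HasShift C ℤ] [Linear K C] : Prop where
  finiteDimensional : ∀ X Y : C, FiniteDimensional K (X ⟶ Y)
  eventually_subsingleton : ∀ X Y : C, ∀ᶠ n : ℤ in atTop, Subsingleton (X ⟶ Y⟦n⟧)

variable {K : Type*} [Field K] {C : Type u} [Category.{v} C] [Preadditive C] [HasZeroObject C]
  [HasShift C ℤ] [∀ n : ℤ, (shiftFunctor C n).Additive] [Pretriangulated C] [Linear K C]

lemma homRank_obj₂_eq_add {X : C} {p : X ⟶ X} (hp : p ≫ p = p) {D : Triangle C}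
    (hD : D ∈ distTriang C) [FiniteDimensional K (X ⟶ D.obj₂)] :
    homRank K p (𝟙 D.obj₂) = homRank K p D.mor₁ + homRank K p D.mor₂ := by
  have hker : (Linear.leftComp K D.obj₂ p).range ⊓ (Linear.rightComp K X D.mor₂).ker =
      (Linear.rightComp K X D.mor₁ ∘ₗ Linear.leftComp K D.obj₁ p).range := by
    ext f
    refine ⟨?_, ?_⟩
    · rintro ⟨⟨g, rfl⟩, hg⟩
      obtain ⟨k, hk⟩ := D.coyoneda_exact₂ hD (p ≫ g) hg
      exact ⟨k, by simp [← hk, reassoc_of% hp]⟩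
    · rintro ⟨k, rfl⟩
      exact ⟨⟨k ≫ D.mor₁, by simp⟩, by simp [comp_distTriang_mor_zero₁₂ D hD]⟩
  rw [homRank_id_right, finrank_eq_map_add_inf_ker _ (Linear.rightComp K X D.mor₂), hker,
    ← LinearMap.range_comp, add_comm, homRank, homRank]

lemma exact_leftComp_of_distTriang {D : Triangle C} (hD : D ∈ distTriang C) (T : C) :
    Function.Exact (Linear.leftComp K T D.mor₂) (Linear.leftComp K T D.mor₁) := by
  refine fun f => ⟨fun hf => ?_, ?_⟩
  · obtain ⟨g, hg⟩ := D.yoneda_exact₂ hD f hf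
    exact ⟨g, hg.symm⟩
  · rintro ⟨g, rfl⟩
    simp [reassoc_of% comp_distTriang_mor_zero₁₂ D hD]

lemma finrank_hom_obj₂_eq_add {D : Triangle C} (hD : D ∈ distTriang C) (T : C)
    [FiniteDimensional K (D.obj₂ ⟶ T)] :
    Module.finrank K (D.obj₂ ⟶ T) = homRank K D.mor₁ (𝟙 T) + homRank K D.mor₂ (𝟙 T) := by
  rw [homRank_id_right, homRank_id_right, ← (exact_leftComp_of_distTriang hD T).linearMap_ker_eq,
    LinearMap.finrank_range_add_finrank_ker]

lemma homRank_eq_of_homRank_shift_map_eq [∀ X Y : C, FiniteDimensional K (X ⟶ Y)] {X X' : C}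
    {p : X ⟶ X} {p' : X' ⟶ X'} (hp : p ≫ p = p) (hp' : p' ≫ p' = p')
    (h : ∀ Y : C, homRank K p (𝟙 Y) = homRank K p' (𝟙 Y)) {V Y : C} {w : V ⟶ Y}
    (hw : homRank K p (w⟦(1 : ℤ)⟧') = homRank K p' (w⟦(1 : ℤ)⟧')) :
    homRank K p w = homRank K p' w := by
  have of_mor₂ : ∀ D ∈ distTriang C,
      homRank K p D.mor₂ = homRank K p' D.mor₂ → homRank K p D.mor₁ = homRank K p' D.mor₁ := by
    intro D hD h₂
    have h₀ := h D.obj₂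
    rw [homRank_obj₂_eq_add hp hD, homRank_obj₂_eq_add hp' hD] at h₀
    lia
  obtain ⟨Z, g, d, hD⟩ := distinguished_cocone_triangle w
  have hD₁ := rot_of_distTriang _ hD
  have hD₂ := rot_of_distTriang _ hD₁
  refine of_mor₂ _ hD (of_mor₂ _ hD₁ (of_mor₂ _ hD₂ ?_))
  rw [← homRank_neg_right, ← homRank_neg_right K p'] at hw
  exact hw

/-- The claim for `w` follows from the one for `w⟦n⟧`, which is trivial for large `n`. -/
lemma homRank_eq_of_forall_homRank_id_eq (hC : IsHomFiniteAbove K C) {X X' : C} {p : X ⟶ X}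
    {p' : X' ⟶ X'} (hp : p ≫ p = p) (hp' : p' ≫ p' = p')
    (h : ∀ Y : C, homRank K p (𝟙 Y) = homRank K p' (𝟙 Y)) {V Y : C} (w : V ⟶ Y) :
    homRank K p w = homRank K p' w := by
  have := hC.finiteDimensional
  have of_subsingleton : ∀ (n : ℕ) {V Y : C} (w : V ⟶ Y),
      (∀ k : ℤ, n ≤ k → Subsingleton (X ⟶ Y⟦k⟧) ∧ Subsingleton (X' ⟶ Y⟦k⟧)) →
      homRank K p w = homRank K p' w := by
    intro n
    induction n with
    | zero =>
      intro V Y w hY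
      obtain ⟨_, _⟩ := hY 0 le_rfl
      let e := (shiftFunctorZero C ℤ).symm.app Y
      have : Subsingleton (X ⟶ Y) := e.homToEquiv.subsingleton
      have : Subsingleton (X' ⟶ Y) := e.homToEquiv.subsingleton
      rw [homRank_eq_zero_iff.2 fun f => Subsingleton.elim (p ≫ f ≫ w) 0,
        homRank_eq_zero_iff.2 fun f => Subsingleton.elim (p' ≫ f ≫ w) 0]
    | succ n ih =>
      intro V Y w hY
      refine homRank_eq_of_homRank_shift_map_eq hp hp' h (ih _ fun k hk => ?_)
      obtain ⟨_, _⟩ := hY (1 + k) (by push_cast; lia)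
      let e := (shiftFunctorAdd C 1 k).symm.app Y
      exact ⟨e.homToEquiv.subsingleton, e.homToEquiv.subsingleton⟩
  obtain ⟨b, hb⟩ := eventually_atTop.1
    ((hC.eventually_subsingleton X Y).and (hC.eventually_subsingleton X' Y))
  exact of_subsingleton b.toNat w fun k hk => hb k (by lia)

end Triangulated

section Retract

variable {K : Type*} [Field K] {C : Type u} [Category.{v} C] [Preadditive C] [HasZeroObject C]
  [HasShift C ℤ] [∀ n : ℤ, (shiftFunctor C n).Additive] [Pretriangulated C] [Linear K C]

variable (K) in
/-- The morphism `w` is the second morphism of a distinguished triangle whose first morphism goes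
from copies of `W` to `Z` and has components `q ≫ y i`. -/
lemma exists_forall_comp_eq_zero_and_eq_sum {W : C}
    (q : W ⟶ W) (Z : C) [FiniteDimensional K (W ⟶ Z)] :
    ∃ (n : ℕ) (y : Fin n → (W ⟶ Z)) (V : C) (w : Z ⟶ V), (∀ g : W ⟶ Z, q ≫ g ≫ w = 0) ∧
      ∀ {T : C} (f : T ⟶ Z), f ≫ w = 0 →
        ∃ x : Fin n → (T ⟶ W), f = ∑ i, x i ≫ q ≫ y i := by
  let y := Module.finBasis K (W ⟶ Z)
  let β : (⨁ fun _ : Fin (Module.finrank K (W ⟶ Z)) => W) ⟶ Z := biproduct.desc fun i => q ≫ y i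
  obtain ⟨V, w, z, hD⟩ := distinguished_cocone_triangle β
  refine ⟨_, y, V, w, fun g => ?_, fun {T} f hf => ?_⟩
  · have hβw : β ≫ w = 0 := comp_distTriang_mor_zero₁₂ _ hD
    have hy : Linear.leftComp K V q ∘ₗ Linear.rightComp K W w = 0 := y.ext fun i => by
      simpa [β] using biproduct.ι _ i ≫= hβw
    exact LinearMap.congr_fun hy g
  · obtain ⟨γ, hγ⟩ : ∃ γ : T ⟶ ⨁ _, f = γ ≫ β := Triangle.coyoneda_exact₂ _ hD f hf
    refine ⟨fun i => γ ≫ biproduct.π _ i, hγ.trans ?_⟩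
    simp only [β, biproduct.desc_eq, Preadditive.comp_sum, Category.assoc]

lemma exists_eq_sum_of_forall_homRank_id_eq (hC : IsHomFiniteAbove K C) {Z W : C} {p : Z ⟶ Z}
    {q : W ⟶ W} (hp : p ≫ p = p) (hq : q ≫ q = q)
    (h : ∀ Y : C, homRank K p (𝟙 Y) = homRank K q (𝟙 Y)) :
    ∃ (n : ℕ) (x : Fin n → (Z ⟶ W)) (y : Fin n → (W ⟶ Z)),
      p = ∑ i, p ≫ x i ≫ q ≫ y i ≫ p := by
  have := hC.finiteDimensional
  obtain ⟨n, y, V, w, hw, hfac⟩ := exists_forall_comp_eq_zero_and_eq_sum K q Z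
  have hpw : homRank K p w = 0 :=
    (homRank_eq_of_forall_homRank_id_eq hC hp hq h w).trans (homRank_eq_zero_iff.2 hw)
  obtain ⟨x, hx⟩ := hfac p (by simpa using homRank_eq_zero_iff.1 hpw (𝟙 Z))
  refine ⟨n, x, y, ?_⟩
  calc p = p ≫ p ≫ p := by rw [hp, hp]
    _ = p ≫ (∑ i, x i ≫ q ≫ y i) ≫ p := by rw [← hx]
    _ = ∑ i, p ≫ x i ≫ q ≫ y i ≫ p := by
      simp [Preadditive.comp_sum, Preadditive.sum_comp]

lemma exists_partialIso_within (hC : IsHomFiniteAbove K C) {Z W : C} {p : Z ⟶ Z} {q : W ⟶ W}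
    (hp : p ≫ p = p) (hq : q ≫ q = q) (h : ∀ Y : C, homRank K p (𝟙 Y) = homRank K q (𝟙 Y))
    (hp₀ : p ≠ 0) : ∃ f : PartialIso Z W, f.hom ≠ 0 ∧ f.Within p q := by
  have := hC.finiteDimensional Z Z
  obtain ⟨n, x, y, hsum⟩ := exists_eq_sum_of_forall_homRank_id_eq hC hp hq h
  obtain ⟨i, b, hib⟩ : ∃ i, ∃ b : End Z,
      ¬ IsNilpotent (R := End Z) (b * End.of (p ≫ x i ≫ q ≫ y i ≫ p)) := by
    by_contra! hnil
    exact hp₀ (eq_zero_of_isIdempotentElem_of_isNilpotent_mul (A := End Z) hp _ hnil hsum)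
  refine PartialIso.exists_hom_ne_zero_within (K := K) hp hq (x := p ≫ x i ≫ q)
    (y := y i ≫ p ≫ b) (by rw [reassoc_of% hp]) (by simp only [Category.assoc, hq]) ?_
  simpa [End.mul_def] using hib

lemma nonempty_retract_of_finrank_eq (hC : IsHomFiniteAbove K C) {Z W : C}
    (hdim : ∀ T : C, Module.finrank K (Z ⟶ T) = Module.finrank K (W ⟶ T)) :
    Nonempty (Retract Z W) := by
  have := hC.finiteDimensional
  obtain ⟨f, -, hmax⟩ := exists_maximalFor_of_wellFoundedGT (fun _ : PartialIso Z W => True)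
    (fun f => (Linear.leftComp K Z f.source).range) ⟨⟨0, 0, by simp, by simp⟩, trivial⟩
  suffices hf : 𝟙 Z - f.source = 0 from ⟨⟨f.hom, f.inv, (sub_eq_zero.1 hf).symm⟩⟩
  by_contra hf
  obtain ⟨g, hg₀, hg⟩ := exists_partialIso_within hC
    (Idempotents.idem_of_id_sub_idem _ f.source_comp_source)
    (Idempotents.idem_of_id_sub_idem _ f.target_comp_target)
    (fun Y => f.homRank_compl_source_eq K hdim Y) hf
  have hlt := f.range_leftComp_source_lt_range_leftComp_source_add K hg hg₀
  exact hlt.not_ge (hmax trivial hlt.le)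

end Retract

section Octahedral

variable {K : Type*} [Field K] {C : Type u} [Category.{v} C] [Preadditive C] [HasZeroObject C]
  [HasShift C ℤ] [∀ n : ℤ, (shiftFunctor C n).Additive] [Pretriangulated C] [Linear K C]

lemma exact_leftComp_shift_of_distTriang {D : Triangle C} (hD : D ∈ distTriang C) (T : C) :
    Function.Exact (Linear.leftComp K T (D.mor₂⟦(1 : ℤ)⟧'))
      (Linear.leftComp K T (D.mor₁⟦(1 : ℤ)⟧')) := by
  have h := exact_leftComp_of_distTriang (K := K)
    (rot_of_distTriang _ (rot_of_distTriang _ (rot_of_distTriang _ hD))) T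
  have hneg {X Y : C} (u : X ⟶ Y) : Linear.leftComp K T (-u) = -Linear.leftComp K T u := by
    ext; simp
  have hker : (Linear.leftComp K T (-D.mor₁⟦(1 : ℤ)⟧')).ker =
      (Linear.leftComp K T (-D.mor₂⟦(1 : ℤ)⟧')).range := h.linearMap_ker_eq
  rw [hneg, hneg, LinearMap.ker_neg, LinearMap.range_neg] at hker
  exact LinearMap.exact_iff.2 hker

lemma mk_rotate_rotate_distinguished {X Y Z : C} {f : X ⟶ Y} {g : Y ⟶ Z} {h : Z ⟶ X⟦(1 : ℤ)⟧}
    (hT : Triangle.mk f g h ∈ distTriang C) :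
    Triangle.mk h (-f⟦(1 : ℤ)⟧') (-g⟦(1 : ℤ)⟧') ∈ distTriang C :=
  rot_of_distTriang _ (rot_of_distTriang _ hT)

lemma finrank_hom_cone_add_eq {X Y Z : C} {f : X ⟶ Y} {g : Y ⟶ Z} {h : Z ⟶ X⟦(1 : ℤ)⟧}
    (hT : Triangle.mk f g h ∈ distTriang C) (T : C) [∀ A : C, FiniteDimensional K (A ⟶ T)] :
    Module.finrank K (Z ⟶ T) + homRank K f (𝟙 T) + homRank K (f⟦(1 : ℤ)⟧') (𝟙 T) =
      Module.finrank K (Y ⟶ T) + Module.finrank K (X⟦(1 : ℤ)⟧ ⟶ T) := by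
  have hY : Module.finrank K (Y ⟶ T) = homRank K f (𝟙 T) + homRank K g (𝟙 T) :=
    finrank_hom_obj₂_eq_add hT T
  have hZ : Module.finrank K (Z ⟶ T) = homRank K g (𝟙 T) + homRank K h (𝟙 T) :=
    finrank_hom_obj₂_eq_add (rot_of_distTriang _ hT) T
  have hX : Module.finrank K (X⟦(1 : ℤ)⟧ ⟶ T) =
      homRank K h (𝟙 T) + homRank K (-f⟦(1 : ℤ)⟧') (𝟙 T) :=
    finrank_hom_obj₂_eq_add (mk_rotate_rotate_distinguished hT) T
  rw [homRank_neg_left] at hX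
  lia

/-- A substitute for the octahedral axiom. -/
lemma nonempty_retract_cone (hC : IsHomFiniteAbove K C) {N₁ N M A A₁ Z W : C}
    {i : N₁ ⟶ N} {p : N ⟶ M} {d : M ⟶ N₁⟦(1 : ℤ)⟧} (hN : Triangle.mk i p d ∈ distTriang C)
    {f : N ⟶ A} {b : A ⟶ Z} {c : Z ⟶ N⟦(1 : ℤ)⟧} (hZ : Triangle.mk f b c ∈ distTriang C)
    {a : A ⟶ A₁} {e : A₁ ⟶ N₁⟦(1 : ℤ)⟧} (hA : Triangle.mk (i ≫ f) a e ∈ distTriang C)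
    {g : M ⟶ A₁} {r : A₁ ⟶ W} {s : W ⟶ M⟦(1 : ℤ)⟧} (hW : Triangle.mk g r s ∈ distTriang C)
    (hpg : p ≫ g = f ≫ a) (hge : g ≫ e = d) : Nonempty (Retract Z W) := by
  have := hC.finiteDimensional
  refine nonempty_retract_of_finrank_eq hC fun T => ?_
  have hexA : Function.Exact (Linear.leftComp K T a) (Linear.leftComp K T (i ≫ f)) :=
    exact_leftComp_of_distTriang hA T
  have hexN : Function.Exact (Linear.leftComp K T d) (Linear.leftComp K T p) :=
    exact_leftComp_of_distTriang (rot_of_distTriang _ hN) T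
  have hexA_shift : Function.Exact (Linear.leftComp K T (a⟦(1 : ℤ)⟧'))
      (Linear.leftComp K T (i⟦(1 : ℤ)⟧' ≫ f⟦(1 : ℤ)⟧')) := by
    rw [← Functor.map_comp]
    exact exact_leftComp_shift_of_distTriang hA T
  have hexN_shift : Function.Exact (Linear.leftComp K T (d⟦(1 : ℤ)⟧'))
      (Linear.leftComp K T (p⟦(1 : ℤ)⟧')) :=
    exact_leftComp_shift_of_distTriang (rot_of_distTriang _ hN) T
  have hrank := homRank_add_homRank_comp hpg hge hexA hexN
  have hrank_shift := homRank_add_homRank_comp (g := g⟦(1 : ℤ)⟧') (e := e⟦(1 : ℤ)⟧')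
    (by simp only [← Functor.map_comp, hpg]) (by simp only [← Functor.map_comp, hge])
    hexA_shift hexN_shift
  rw [← Functor.map_comp] at hrank_shift
  have hdimN := finrank_hom_cone_add_eq (K := K) (mk_rotate_rotate_distinguished hN) T
  have hdimZ := finrank_hom_cone_add_eq (K := K) hZ T
  have hdimA := finrank_hom_cone_add_eq (K := K) hA T
  have hdimW := finrank_hom_cone_add_eq (K := K) hW T
  lia

lemma nonempty_retract_of_nonempty_retract_map {C : Type u} [Category.{v} C] {D : Type u₂}
    [Category.{v₂} D] (F : C ⥤ D) [F.Full] [F.Faithful] {X Y : C}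
    (h : Nonempty (Retract (F.obj X) (F.obj Y))) : Nonempty (Retract X Y) := by
  obtain ⟨r⟩ := h
  refine ⟨⟨F.preimage r.i, F.preimage r.r, F.map_injective ?_⟩⟩
  rw [F.map_comp, F.map_preimage, F.map_preimage, r.retract, F.map_id]

lemma exists_triangle_retract (hC : IsHomFiniteAbove K C) {A B N N₁ M : C}
    {f : A ⟶ B} {g : B ⟶ N} {h : N ⟶ A⟦(1 : ℤ)⟧} (hB : Triangle.mk f g h ∈ distTriang C)
    {i : N₁ ⟶ N} {p : N ⟶ M} {d : M ⟶ N₁⟦(1 : ℤ)⟧} (hN : Triangle.mk i p d ∈ distTriang C) :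
    ∃ (A₁ W : C) (f₁ : A ⟶ A₁) (g₁ : A₁ ⟶ N₁) (q : A₁ ⟶ W) (r : W ⟶ M) (s : M ⟶ A₁⟦(1 : ℤ)⟧),
      Triangle.mk f₁ g₁ (i ≫ h) ∈ distTriang C ∧ Triangle.mk q r s ∈ distTriang C ∧
        Nonempty (Retract B W) := by
  obtain ⟨A₁, f₁, g₁, hA₁⟩ := distinguished_cocone_triangle₂ (i ≫ h)
  have hA₁_rot := mk_rotate_rotate_distinguished hA₁
  obtain ⟨s, hps, hds⟩ : ∃ s : M ⟶ A₁⟦(1 : ℤ)⟧, p ≫ s = h ≫ (-f₁⟦(1 : ℤ)⟧') ∧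
      d ≫ (𝟙 N₁)⟦(1 : ℤ)⟧' = s ≫ (-g₁⟦(1 : ℤ)⟧') :=
    complete_distinguished_triangle_morphism _ _ hN hA₁_rot (𝟙 N₁) h (Category.id_comp _).symm
  obtain ⟨W, q, r, hW⟩ := distinguished_cocone_triangle₂ s
  rw [CategoryTheory.Functor.map_id, Category.comp_id] at hds
  exact ⟨A₁, W, f₁, g₁, q, r, s, hA₁, hW,
    nonempty_retract_of_nonempty_retract_map (shiftFunctor C (1 : ℤ))
      (nonempty_retract_cone hC hN (mk_rotate_rotate_distinguished hB) hA₁_rot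
        (mk_rotate_rotate_distinguished hW) hps hds.symm)⟩

end Octahedral

section Retract

variable {C : Type u} [Category.{v} C] [Preadditive C] [HasZeroObject C]
  [HasShift C ℤ] [∀ n : ℤ, (shiftFunctor C n).Additive] [Pretriangulated C]

/-- The composite of the induced morphisms `B ⟶ B' ⟶ B` need not be the identity, but it is
an isomorphism. -/
lemma nonempty_retract_of_triangles {A B N A' B' N' : C} {f : A ⟶ B} {g : B ⟶ N}
    {h : N ⟶ A⟦(1 : ℤ)⟧} (hT : Triangle.mk f g h ∈ distTriang C) {f' : A' ⟶ B'} {g' : B' ⟶ N'}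
    {h' : N' ⟶ A'⟦(1 : ℤ)⟧} (hT' : Triangle.mk f' g' h' ∈ distTriang C)
    (rA : Retract A A') (rN : Retract N N')
    (hi : h ≫ rA.i⟦(1 : ℤ)⟧' = rN.i ≫ h') (hr : h' ≫ rA.r⟦(1 : ℤ)⟧' = rN.r ≫ h) :
    Nonempty (Retract B B') := by
  obtain ⟨φ, hfφ, hgφ⟩ : ∃ φ : B ⟶ B', f ≫ φ = rA.i ≫ f' ∧ g ≫ rN.i = φ ≫ g' :=
    complete_distinguished_triangle_morphism₂ _ _ hT hT' rA.i rN.i hi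
  obtain ⟨ψ, hfψ, hgψ⟩ : ∃ ψ : B' ⟶ B, f' ≫ ψ = rA.r ≫ f ∧ g' ≫ rN.r = ψ ≫ g :=
    complete_distinguished_triangle_morphism₂ _ _ hT' hT rA.r rN.r hr
  have hf : f ≫ φ ≫ ψ = f := by rw [reassoc_of% hfφ, hfψ, rA.retract_assoc]
  have hg : (φ ≫ ψ) ≫ g = g := by
    rw [Category.assoc, ← hgψ, ← reassoc_of% hgφ, rN.retract, Category.comp_id]
  let χ : Triangle.mk f g h ⟶ Triangle.mk f g h :=
    { hom₁ := 𝟙 A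
      hom₂ := φ ≫ ψ
      hom₃ := 𝟙 N
      comm₁ := hf.trans (Category.id_comp f).symm
      comm₂ := (Category.comp_id g).trans hg.symm
      comm₃ := by
        change h ≫ (𝟙 A)⟦(1 : ℤ)⟧' = 𝟙 N ≫ h
        simp }
  have : IsIso (φ ≫ ψ) := isIso₂_of_isIso₁₃ χ hT hT
    (inferInstanceAs (IsIso (𝟙 A))) (inferInstanceAs (IsIso (𝟙 N)))
  exact ⟨⟨φ, ψ ≫ inv (φ ≫ ψ), by rw [← Category.assoc, IsIso.hom_inv_id]⟩⟩

lemma exists_iso_biprod_of_retract {X Y : C} (r : Retract X Y) :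
    ∃ Z : C, Nonempty (Y ≅ X ⊞ Z) := by
  obtain ⟨Z, g, h, hT⟩ := distinguished_cocone_triangle r.i
  have : Mono r.i := (SplitMono.mk r.r r.retract).mono
  obtain ⟨e, -⟩ := exists_iso_binaryBiproduct_of_distTriang _ hT
    (Triangle.mor₃_eq_zero_of_mono₁ _ hT this)
  exact ⟨Z, ⟨e⟩⟩

lemma isThick_thickClosure (M : C) : IsThick C (thickClosure C M) where
  mem_of_iso e hX := fun S hS => hS.1.mem_of_iso e (hX S hS)
  shift_mem X n hX := fun S hS => hS.1.shift_mem X n (hX S hS)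
  cone_mem T hT h₁ h₂ := fun S hS => hS.1.cone_mem T hT (h₁ S hS) (h₂ S hS)
  summand_mem X Y hXY := fun S hS => hS.1.summand_mem X Y (hXY S hS)

lemma self_mem_thickClosure (M : C) : M ∈ thickClosure C M := fun _ hS => hS.2

lemma IsThick.retract_mem {S : Set C} (hS : IsThick C S) {X Y : C} (r : Retract X Y)
    (hY : Y ∈ S) : X ∈ S := by
  obtain ⟨Z, ⟨e⟩⟩ := exists_iso_biprod_of_retract r
  exact hS.summand_mem X Z (hS.mem_of_iso e hY)

lemma IsThick.mem_of_triangle {S : Set C} (hS : IsThick C S) {X Y Z : C} {f : X ⟶ Y}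
    {g : Y ⟶ Z} {h : Z ⟶ X⟦(1 : ℤ)⟧} (hT : Triangle.mk f g h ∈ distTriang C) (hX : X ∈ S)
    (hZ : Z ∈ S) : Y ∈ S :=
  hS.mem_of_iso (shiftShiftNeg Y (1 : ℤ))
    (hS.shift_mem _ _ (hS.cone_mem _ (mk_rotate_rotate_distinguished hT) hZ
      (hS.shift_mem X 1 hX)))

end Retract

section Cost

variable {C : Type u} [Category.{v} C] [Preadditive C] [HasZeroObject C]
  [HasShift C ℤ] [∀ n : ℤ, (shiftFunctor C n).Additive] [Pretriangulated C]

/-- `HasCost t M c X` means that `X` can be built from a zero object at total cost `c` by attaching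
shifts `M⟦n⟧`, each at cost `exp (n t)`, and passing to retracts. In contrast to the definition
of `complexity`, retracts may be taken at every stage. -/
inductive HasCost (t : ℝ) (M : C) : ℝ≥0∞ → C → Prop
  | zero {X : C} (hX : IsZero X) : HasCost t M 0 X
  | step {c : ℝ≥0∞} {A B : C} {n : ℤ} {f : A ⟶ B} {g : B ⟶ M⟦n⟧} {h : M⟦n⟧ ⟶ A⟦(1 : ℤ)⟧}
      (hA : HasCost t M c A) (hT : Triangle.mk f g h ∈ distTriang C) :
      HasCost t M (c + ENNReal.ofReal (Real.exp (n * t))) B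
  | retract {c : ℝ≥0∞} {A X : C} (hA : HasCost t M c A) (r : Retract X A) : HasCost t M c X

namespace HasCost

variable {t : ℝ} {M : C}

lemma of_iso {c : ℝ≥0∞} {X Y : C} (hX : HasCost t M c X) (e : X ≅ Y) : HasCost t M c Y :=
  hX.retract (Retract.ofIso e.symm)

lemma of_triangle {c : ℝ≥0∞} (T : Triangle C) (hT : T ∈ distTriang C)
    (h₁ : HasCost t M c T.obj₁) {n : ℤ} (e : T.obj₃ ≅ M⟦n⟧) :
    HasCost t M (c + ENNReal.ofReal (Real.exp (n * t))) T.obj₂ := by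
  refine step (f := T.mor₁) (g := T.mor₂ ≫ e.hom) (h := e.inv ≫ T.mor₃) h₁ ?_
  exact isomorphic_distinguished _ hT _
    (Triangle.isoMk _ _ (Iso.refl _) (Iso.refl _) e.symm
      ((Category.comp_id _).trans (Category.id_comp _).symm)
      (by change (T.mor₂ ≫ e.hom) ≫ e.inv = 𝟙 T.obj₂ ≫ T.mor₂; simp)
      (by change (e.inv ≫ T.mor₃) ≫ (𝟙 T.obj₁)⟦(1 : ℤ)⟧' = e.inv ≫ T.mor₃; simp))

lemma self : HasCost t M 1 M := by
  simpa using of_triangle (t := t) _ (contractible_distinguished₁ M)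
    (zero (isZero_zero C)) (n := 0) ((shiftFunctorZero C ℤ).symm.app M)

lemma ne_top {c : ℝ≥0∞} {X : C} (hX : HasCost t M c X) : c ≠ ⊤ := by
  induction hX with
  | zero => exact ENNReal.zero_ne_top
  | step _ _ ih => exact ENNReal.add_ne_top.2 ⟨ih, ENNReal.ofReal_ne_top⟩
  | retract _ _ ih => exact ih

lemma mem_thickClosure {c : ℝ≥0∞} {X : C} (hX : HasCost t M c X) : X ∈ thickClosure C M := by
  have hthick := isThick_thickClosure M
  have hM := self_mem_thickClosure M
  induction hX with
  | zero hX =>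
    have h0 := hthick.cone_mem _ (contractible_distinguished M) hM hM
    exact hthick.mem_of_iso ((isZero_zero C).iso hX) h0
  | step _ hT ih => exact hthick.mem_of_triangle hT ih (hthick.shift_mem M _ hM)
  | retract _ r ih => exact hthick.retract_mem r ih

lemma shift {c : ℝ≥0∞} {X : C} (hX : HasCost t M c X) (k : ℤ) :
    HasCost t M (c * ENNReal.ofReal (Real.exp (k * t))) (X⟦k⟧) := by
  induction hX with
  | zero hX => simpa using zero ((shiftFunctor C k).map_isZero hX)
  | @step c A B n f g h _ hT ih =>
    have hexp : ENNReal.ofReal (Real.exp ((n + k : ℤ) * t)) =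
        ENNReal.ofReal (Real.exp (n * t)) * ENNReal.ofReal (Real.exp (k * t)) := by
      rw [← ENNReal.ofReal_mul (Real.exp_pos _).le, ← Real.exp_add, ← add_mul, Int.cast_add]
    rw [add_mul, ← hexp]
    exact of_triangle _ (Triangle.shift_distinguished _ hT k) ih
      ((shiftFunctorAdd C n k).symm.app M)
  | retract _ r ih => exact ih.retract (r.map _)

lemma add {K : Type*} [Field K] [Linear K C] (hC : IsHomFiniteAbove K C) {c c' : ℝ≥0∞} {N : C}
    (hN : HasCost t M c N) {A B : C} (hA : HasCost t M c' A) {f : A ⟶ B} {g : B ⟶ N}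
    {h : N ⟶ A⟦(1 : ℤ)⟧} (hT : Triangle.mk f g h ∈ distTriang C) : HasCost t M (c' + c) B := by
  induction hN generalizing A B with
  | zero hX =>
    have : IsIso f := (Triangle.isZero₃_iff_isIso₁ _ hT).1 hX
    simpa using hA.of_iso (asIso f)
  | step _ hN ih =>
    obtain ⟨A₁, W, _, _, _, _, _, hA₁, hW, ⟨r⟩⟩ := exists_triangle_retract hC hT hN
    rw [← add_assoc]
    exact ((ih hA hA₁).step hW).retract r
  | retract _ r ih =>
    obtain ⟨B', _, _, hB'⟩ := distinguished_cocone_triangle₂ (r.r ≫ h)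
    obtain ⟨ρ⟩ := nonempty_retract_of_triangles hT hB' (Retract.refl A) r (by simp) (by simp)
    exact (ih hA hB').retract ρ

lemma comp {K : Type*} [Field K] [Linear K C] (hC : IsHomFiniteAbove K C) {c c' : ℝ≥0∞}
    {N X : C} (hN : HasCost t M c N) (hX : HasCost t N c' X) : HasCost t M (c * c') X := by
  induction hX with
  | zero hX => simpa using zero hX
  | step _ hT ih =>
    rw [mul_add]
    exact add hC (hN.shift _) ih hT
  | retract _ r ih => exact ih.retract r

lemma map {D : Type u₂} [Category.{v₂} D] [Preadditive D] [HasZeroObject D]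
    [HasShift D ℤ] [∀ n : ℤ, (shiftFunctor D n).Additive] [Pretriangulated D]
    (F : C ⥤ D) [F.CommShift ℤ] [F.IsTriangulated] {c : ℝ≥0∞} {X : C}
    (hX : HasCost t M c X) : HasCost t (F.obj M) c (F.obj X) := by
  induction hX with
  | zero hX => exact zero (F.map_isZero hX)
  | @step c A B n f g h _ hT ih =>
    exact of_triangle _ (F.map_distinguished _ hT) ih ((F.commShiftIso n).app M)
  | retract _ r ih => exact ih.retract (r.map F)

end HasCost

/-- The objects `A 0, …, A p` form a tower over `M` with shifts `n`, as in the definition of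
`complexity`: `A 0` is zero and `A (i + 1)` is obtained from `A i` by attaching `M⟦n i⟧`. -/
structure IsTower (M : C) {p : ℕ} (n : Fin p → ℤ) (A : Fin (p + 1) → C) : Prop where
  isZero : IsZero (A 0)
  exists_triangle : ∀ i : Fin p, ∃ (f : A i.castSucc ⟶ A i.succ) (g : A i.succ ⟶ M⟦n i⟧)
    (h : M⟦n i⟧ ⟶ (A i.castSucc)⟦(1 : ℤ)⟧), Triangle.mk f g h ∈ distTriang C

variable {t : ℝ} {M : C}

lemma IsTower.hasCost {p : ℕ} {n : Fin p → ℤ} {A : Fin (p + 1) → C} (hA : IsTower M n A) :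
    HasCost t M (∑ i, ENNReal.ofReal (Real.exp (n i * t))) (A (Fin.last p)) := by
  induction p with
  | zero => simpa using HasCost.zero hA.isZero
  | succ p ih =>
    rw [Fin.sum_univ_castSucc]
    obtain ⟨f, g, h, hT⟩ := hA.exists_triangle (Fin.last p)
    have hinit : IsTower M (fun i => n i.castSucc) (fun i => A i.castSucc) :=
      ⟨hA.isZero, fun i => hA.exists_triangle i.castSucc⟩
    exact (ih hinit).step hT

lemma IsTower.snoc {p : ℕ} {n : Fin p → ℤ} {A : Fin (p + 1) → C} (hA : IsTower M n A) {m : ℤ}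
    {B : C} {f : A (Fin.last p) ⟶ B} {g : B ⟶ M⟦m⟧} {h : M⟦m⟧ ⟶ (A (Fin.last p))⟦(1 : ℤ)⟧}
    (hT : Triangle.mk f g h ∈ distTriang C) :
    IsTower M (Fin.snoc (α := fun _ => ℤ) n m) (Fin.snoc (α := fun _ => C) A B) where
  isZero := by
    rw [← Fin.castSucc_zero, Fin.snoc_castSucc]
    exact hA.isZero
  exists_triangle i := by
    induction i using Fin.lastCases with
    | last =>
      rw [Fin.succ_last, Fin.snoc_last, Fin.snoc_last, Fin.snoc_castSucc]
      exact ⟨_, _, _, hT⟩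
    | cast i =>
      rw [Fin.succ_castSucc, Fin.snoc_castSucc, Fin.snoc_castSucc, Fin.snoc_castSucc]
      exact hA.exists_triangle i

lemma HasCost.exists_isTower {c : ℝ≥0∞} {X : C} (hX : HasCost t M c X) :
    ∃ (p : ℕ) (n : Fin p → ℤ) (A : Fin (p + 1) → C), IsTower M n A ∧
      Nonempty (Retract X (A (Fin.last p))) ∧
      c = ∑ i, ENNReal.ofReal (Real.exp (n i * t)) := by
  induction hX with
  | @zero X hX =>
    exact ⟨0, Fin.elim0, fun _ => X, ⟨hX, fun i => i.elim0⟩, ⟨Retract.refl X⟩, by simp⟩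
  | @step c A B m f g h _ hT ih =>
    obtain ⟨p, n, A', hA', ⟨r⟩, rfl⟩ := ih
    obtain ⟨B', f', g', hT'⟩ := distinguished_cocone_triangle₂ (h ≫ r.i⟦(1 : ℤ)⟧')
    refine ⟨p + 1, _, _, hA'.snoc hT', ?_, ?_⟩
    · rw [Fin.snoc_last]
      exact nonempty_retract_of_triangles hT hT' r (Retract.refl _) (by simp)
        (by simp [← Functor.map_comp])
    · simp [Fin.sum_univ_castSucc]
  | retract _ r ih =>
    obtain ⟨p, n, A', hA', ⟨r'⟩, hc⟩ := ih
    exact ⟨p, n, A', hA', ⟨r.trans r'⟩, hc⟩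

lemma complexity_eq_sInf_hasCost (t : ℝ) (M X : C) :
    complexity C t M X = sInf {c | HasCost t M c X} := by
  by_cases hX : IsZero X
  · rw [complexity, if_pos hX]
    have hcost : HasCost t M 0 X := .zero hX
    exact (nonpos_iff_eq_zero.1 (sInf_le hcost)).symm
  by_cases hmem : X ∈ thickClosure C M
  · rw [complexity, if_neg hX, if_pos hmem]
    congr 1
    ext c
    constructor
    · rintro ⟨p, -, n, A, N', h0, ⟨e⟩, hA, rfl⟩
      exact ((IsTower.mk h0 hA).hasCost.of_iso e).retract
        ⟨biprod.inl, biprod.fst, biprod.inl_fst⟩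
    · intro h
      obtain ⟨p, n, A, hA, ⟨r⟩, hc⟩ := h.exists_isTower
      obtain ⟨Z, e⟩ := exists_iso_biprod_of_retract r
      have hp : p ≠ 0 := by
        rintro rfl
        exact hX ((IsZero.iff_id_eq_zero X).2 (by
          rw [← r.retract, hA.isZero.eq_zero_of_tgt r.i, zero_comp]))
      exact ⟨p, Nat.pos_of_ne_zero hp, n, A, Z, hA.isZero, e, hA.exists_triangle, hc⟩
  · rw [complexity, if_neg hX, if_neg hmem]
    exact (sInf_eq_top.2 fun c hc => absurd hc.mem_thickClosure hmem).symm

end Cost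

section Complexity

variable {K : Type*} [Field K]
  {C : Type u} [Category.{v} C] [Preadditive C] [HasZeroObject C] [HasShift C ℤ]
  [∀ n : ℤ, (shiftFunctor C n).Additive] [Pretriangulated C]
  {D : Type u₂} [Category.{v₂} D] [Preadditive D] [HasZeroObject D] [HasShift D ℤ]
  [∀ n : ℤ, (shiftFunctor D n).Additive] [Pretriangulated D]

lemma complexity_ne_top_iff {t : ℝ} {M X : C} :
    complexity C t M X ≠ ⊤ ↔ ∃ c, HasCost t M c X := by
  rw [complexity_eq_sInf_hasCost, Ne, sInf_eq_top]
  push Not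
  exact ⟨fun ⟨c, hc, _⟩ => ⟨c, hc⟩, fun ⟨c, hc⟩ => ⟨c, hc, hc.ne_top⟩⟩

lemma complexity_le_of_iso (t : ℝ) (M : C) {X Y : C} (e : X ≅ Y) :
    complexity C t M X ≤ complexity C t M Y := by
  rw [complexity_eq_sInf_hasCost, complexity_eq_sInf_hasCost]
  exact sInf_le_sInf fun c hc => HasCost.of_iso hc e.symm

lemma complexity_le_mul [Linear K C] (hC : IsHomFiniteAbove K C) {t : ℝ} {M N X : C}
    (hMN : complexity C t M N ≠ ⊤) (hNX : complexity C t N X ≠ ⊤) :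
    complexity C t M X ≤ complexity C t M N * complexity C t N X := by
  obtain ⟨c, hc⟩ := complexity_ne_top_iff.1 hMN
  obtain ⟨c', hc'⟩ := complexity_ne_top_iff.1 hNX
  simp only [complexity_eq_sInf_hasCost, sInf_eq_iInf' {c | HasCost t M c N},
    sInf_eq_iInf' {c | HasCost t N c X}]
  exact ENNReal.le_iInf_mul_iInf ⟨⟨c, hc⟩, hc.ne_top⟩ ⟨⟨c', hc'⟩, hc'.ne_top⟩
    fun a b => sInf_le (HasCost.comp hC a.2 b.2)

lemma complexity_map_le (F : C ⥤ D) [F.CommShift ℤ] [F.IsTriangulated] (t : ℝ) (M X : C) :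
    complexity D t (F.obj M) (F.obj X) ≤ complexity C t M X := by
  rw [complexity_eq_sInf_hasCost, complexity_eq_sInf_hasCost]
  exact sInf_le_sInf fun c hc => HasCost.map F hc

lemma complexity_iter_le (F : C ⥤ C) [F.CommShift ℤ] [F.IsTriangulated] (t : ℝ) (M X : C)
    (n : ℕ) : complexity C t ((iter C F n).obj M) ((iter C F n).obj X) ≤ complexity C t M X := by
  induction n with
  | zero => exact le_rfl
  | succ n ih => exact (complexity_map_le F t _ _).trans ih

lemma IsSplitGenerator.complexity_ne_top [Linear K C] (hC : IsHomFiniteAbove K C) {G : C}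
    (hG : IsSplitGenerator C G) (t : ℝ) (X : C) : complexity C t G X ≠ ⊤ := by
  have hthick : IsThick C {X | ∃ c, HasCost t G c X} :=
    { mem_of_iso := fun e ⟨c, hc⟩ => ⟨c, hc.of_iso e⟩
      shift_mem := fun X n ⟨c, hc⟩ => ⟨_, hc.shift n⟩
      cone_mem := fun T hT ⟨c₁, h₁⟩ ⟨c₂, h₂⟩ =>
        ⟨_, (h₁.shift 1).add hC h₂ (rot_of_distTriang _ hT)⟩
      summand_mem := fun X Y ⟨c, hc⟩ => ⟨c, hc.retract ⟨biprod.inl, biprod.fst, biprod.inl_fst⟩⟩ }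
  exact complexity_ne_top_iff.2 (hG X _ ⟨hthick, 1, HasCost.self⟩)

lemma IsSplitGenerator.complexity_iter_le_mul [Linear K C] (hC : IsHomFiniteAbove K C) {G : C}
    (hG : IsSplitGenerator C G) (F : C ⥤ C) [F.CommShift ℤ] [F.IsTriangulated] (t : ℝ) (X : C)
    (n : ℕ) : complexity C t G ((iter C F n).obj X) ≤
      complexity C t G ((iter C F n).obj G) * complexity C t G X := by
  have hiter := complexity_iter_le F t G X n
  refine (complexity_le_mul hC (hG.complexity_ne_top hC t _)
    (ne_top_of_le_ne_top (hG.complexity_ne_top hC t X) hiter)).trans ?_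
  gcongr

lemma IsSplitGenerator.complexity_map_le_mul [Linear K D] {G : C} (hD : IsHomFiniteAbove K D)
    {H : D} (hH : IsSplitGenerator D H) (F : C ⥤ D) [F.CommShift ℤ] [F.IsTriangulated] {t : ℝ}
    {X : C} (hX : complexity C t G X ≠ ⊤) : complexity D t H (F.obj X) ≤
      complexity D t H (F.obj G) * complexity C t G X := by
  have hmap := complexity_map_le F t G X
  refine (complexity_le_mul hD (hH.complexity_ne_top hD t _)
    (ne_top_of_le_ne_top hX hmap)).trans ?_
  gcongr

end Complexity

section Entropy

lemma nonempty_iter_iso {C : Type u} [Category.{v} C] {D : Type u₂} [Category.{v₂} D]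
    {F : C ⥤ C} {F₂ : D ⥤ D} {H : D ⥤ C} (α : F₂ ⋙ H ≅ H ⋙ F) (X : D) (n : ℕ) :
    Nonempty (H.obj ((iter D F₂ n).obj X) ≅ (iter C F n).obj (H.obj X)) := by
  induction n with
  | zero => exact ⟨Iso.refl _⟩
  | succ n ih => exact ih.map fun e => α.app _ ≪≫ F.mapIso e

lemma entropy_eq_expGrowthSup {C : Type u} [Category.{v} C] [Preadditive C] [HasZeroObject C]
    [HasShift C ℤ] [∀ n : ℤ, (shiftFunctor C n).Additive] [Pretriangulated C] (F : C ⥤ C) (G : C)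
    (t : ℝ) : entropy C F G t =
      ExpGrowth.expGrowthSup fun m => complexity C t G ((iter C F m).obj G) := by
  simp only [entropy, ExpGrowth.expGrowthSup, EReal.div_eq_inv_mul, EReal.coe_inv,
    EReal.coe_natCast]

end Entropy

lemma IsFiniteType.isHomFiniteAbove {C : Type u} [Category.{v} C] [Preadditive C]
    [HasZeroObject C] [HasShift C ℤ] [∀ n : ℤ, (shiftFunctor C n).Additive] [Linear ℂ C]
    (hC : IsFiniteType C) : IsHomFiniteAbove ℂ C where
  finiteDimensional X Y := by
    have := (hC X Y).2 0
    exact Module.Finite.equiv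
      (Linear.homCongr ℂ (Iso.refl X) ((shiftFunctorZero C ℤ).app Y))
  eventually_subsingleton X Y := by
    obtain ⟨b, hb⟩ := (hC X Y).1.bddAbove
    filter_upwards [eventually_gt_atTop b] with n hn
    by_contra h
    exact hn.not_ge (hb h)

theorem statement_13_general {K : Type*} [Field K]
    {C₁ : Type u} [Category.{v} C₁] [Preadditive C₁] [HasZeroObject C₁] [HasShift C₁ ℤ]
    [∀ n : ℤ, (shiftFunctor C₁ n).Additive] [Pretriangulated C₁] [Linear K C₁]
    {C₂ : Type u₂} [Category.{v₂} C₂] [Preadditive C₂] [HasZeroObject C₂] [HasShift C₂ ℤ]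
    [∀ n : ℤ, (shiftFunctor C₂ n).Additive] [Pretriangulated C₂] [Linear K C₂]
    (hC₁ : IsHomFiniteAbove K C₁) (hC₂ : IsHomFiniteAbove K C₂)
    {G₁ : C₁} (hG₁ : IsSplitGenerator C₁ G₁) {G₂ : C₂} (hG₂ : IsSplitGenerator C₂ G₂)
    (F₁ : C₁ ⥤ C₁) [F₁.CommShift ℤ] [F₁.IsTriangulated] (F₂ : C₂ ⥤ C₂)
    (F' : C₂ ⥤ C₁) [F'.CommShift ℤ] [F'.IsTriangulated] [F'.Full] [F'.Faithful]
    [F'.IsLeftAdjoint] (α : F₂ ⋙ F' ≅ F' ⋙ F₁) (t : ℝ) :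
    entropy C₂ F₂ G₂ t ≤ entropy C₁ F₁ G₁ t := by
  let R := F'.rightAdjoint
  let adj : F' ⊣ R := Adjunction.ofIsLeftAdjoint F'
  let _ : R.CommShift ℤ := adj.rightAdjointCommShift ℤ
  have : adj.CommShift ℤ := adj.commShift_of_leftAdjoint ℤ
  have : R.IsTriangulated := adj.isTriangulated_rightAdjoint
  rw [entropy_eq_expGrowthSup, entropy_eq_expGrowthSup]
  refine ExpGrowth.expGrowthSup_le_of_eventually_le
    (b := complexity C₂ t G₂ (R.obj G₁) * complexity C₁ t G₁ (F'.obj G₂))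
    (ENNReal.mul_ne_top (hG₂.complexity_ne_top hC₂ t _) (hG₁.complexity_ne_top hC₁ t _))
    (.of_forall fun m => ?_)
  obtain ⟨e⟩ := nonempty_iter_iso α G₂ m
  calc complexity C₂ t G₂ ((iter C₂ F₂ m).obj G₂)
    _ ≤ complexity C₂ t G₂ (R.obj ((iter C₁ F₁ m).obj (F'.obj G₂))) :=
      complexity_le_of_iso t G₂ (asIso (adj.unit.app _) ≪≫ R.mapIso e)
    _ ≤ complexity C₂ t G₂ (R.obj G₁) *
          complexity C₁ t G₁ ((iter C₁ F₁ m).obj (F'.obj G₂)) :=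
      hG₂.complexity_map_le_mul hC₂ R (hG₁.complexity_ne_top hC₁ t _)
    _ ≤ complexity C₂ t G₂ (R.obj G₁) *
          (complexity C₁ t G₁ ((iter C₁ F₁ m).obj G₁) * complexity C₁ t G₁ (F'.obj G₂)) := by
      gcongr
      exact hG₁.complexity_iter_le_mul hC₁ F₁ t (F'.obj G₂) m
    _ = complexity C₂ t G₂ (R.obj G₁) * complexity C₁ t G₁ (F'.obj G₂) *
          complexity C₁ t G₁ ((iter C₁ F₁ m).obj G₁) := by ring

/-- If a fully faithful triangulated functor `F' : T₂ ⥤ T₁` admitting both adjoints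
intertwines `F₂` and `F₁`, then `h_t(F₂) ≤ h_t(F₁)`. -/
theorem statement_13 {C₁ : Type u} [Category.{v} C₁] [Preadditive C₁] [HasZeroObject C₁]
    [HasShift C₁ ℤ] [∀ n : ℤ, (shiftFunctor C₁ n).Additive] [Pretriangulated C₁] [Linear ℂ C₁]
    {C₂ : Type u₂} [Category.{v₂} C₂] [Preadditive C₂] [HasZeroObject C₂]
    [HasShift C₂ ℤ] [∀ n : ℤ, (shiftFunctor C₂ n).Additive] [Pretriangulated C₂] [Linear ℂ C₂]
    (hC₁ : ∃ X : C₁, ¬ IsZero X) (hC₂ : ∃ X : C₂, ¬ IsZero X)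
    (hft₁ : IsFiniteType C₁) (hft₂ : IsFiniteType C₂)
    (G₁ : C₁) (hG₁ : IsSplitGenerator C₁ G₁) (G₂ : C₂) (hG₂ : IsSplitGenerator C₂ G₂)
    (F₁ : C₁ ⥤ C₁) [F₁.Additive] [F₁.Linear ℂ] [F₁.CommShift ℤ] [F₁.IsTriangulated]
    (F₂ : C₂ ⥤ C₂) [F₂.Additive] [F₂.Linear ℂ] [F₂.CommShift ℤ] [F₂.IsTriangulated]
    (h₁ : ∀ n : ℕ, ¬ IsZero ((iter C₁ F₁ n).obj G₁))
    (h₂ : ∀ n : ℕ, ¬ IsZero ((iter C₂ F₂ n).obj G₂))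
    (F' : C₂ ⥤ C₁) [F'.Additive] [F'.Linear ℂ] [F'.CommShift ℤ] [F'.IsTriangulated]
    [F'.Full] [F'.Faithful] [F'.IsLeftAdjoint] [F'.IsRightAdjoint]
    (hcomm : Nonempty ((F₂ ⋙ F') ≅ (F' ⋙ F₁))) (t : ℝ) :
    entropy C₂ F₂ G₂ t ≤ entropy C₁ F₁ G₁ t := by
  obtain ⟨α⟩ := hcomm
  exact statement_13_general hft₁.isHomFiniteAbove hft₂.isHomFiniteAbove hG₁ hG₂ F₁ F₂ F' α t

end CatEntropy
end

section
/- Every matrix A ∈ SL(2, ℤ) with tr(A) > 2 is conjugate in SL(2, ℤ) to a matrix of the form [[1, m_{2n−1}],[m_{2n}, 1 + m_{2n−1} m_{2n}]] · ⋯ · [[1, m₁],[m₂, 1 + m₁ m₂]] for some n ≥ 1 and some positive integers m₁, …, m_{2n}; equivalently, A is conjugate in SL(2, ℤ) to a product L^{m_{2n}} R^{m_{2n−1}} ⋯ L^{m₂} R^{m₁}, where R = [[1,1],[0,1]] and L = [[1,0],[1,1]]. -/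
/-!
Write `A = [[a, b], [c, d]]`. Conjugating by powers of `R` and `L` shifts `a` by multiples of `c`
and `b`, so a conjugate with the least possible `a > 0` has `a ≤ |b|` and `a ≤ |c|`. If `b c ≤ 0`,
then `a d = 1 + b c ≤ 1 - a²`, that is `a (a + d) ≤ 1`, against `tr A > 2`. Hence `b` and `c` have
the same sign, and up to conjugation by the rotation `S` all entries are positive.

Among the conjugates with positive entries, again take one with the least `a`. If `c < a`, then
`d ≤ b`, and `R⁻¹ A R` would be positive with the smaller entry `a - c`; likewise for `b < a` and
`L A L⁻¹`. So `a ≤ b` and `a ≤ c`. For such a matrix, Euclid's algorithm on the column `(a, c)`,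
with remainders of `a` taken in `[1, r]` instead of `[0, r - 1]`, splits off blocks `L^y R^x` on the
left until `a = 1`, where the matrix is itself a block.
-/

namespace SL2Conj

/-- `SL(2, ℤ)`. -/
abbrev SL2Z := Matrix.SpecialLinearGroup (Fin 2) ℤ

/-- The elementary factor `[[1, x], [y, 1 + x y]] = L^y R^x` in `SL(2, ℤ)`. -/
def elemFactor (x y : ℤ) : SL2Z :=
  ⟨!![1, x; y, 1 + x * y], by rw [Matrix.det_fin_two_of]; ring⟩

/-- `L = [[1, 0], [1, 1]]`. -/
def Lmat : SL2Z := elemFactor 0 1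

/-- `R = [[1, 1], [0, 1]]`. -/
def Rmat : SL2Z := elemFactor 1 0

section Group

variable {G : Type*} [Group G]

lemma isConj_conj (g a : G) : IsConj a (g * a * g⁻¹) :=
  isConj_iff.2 ⟨g, rfl⟩

lemma exists_isConj_forall_le_conj {f : G → ℤ} {p : G → Prop} {a : G} (hf : ∀ g, p g → 0 ≤ f g)
    (h : ∃ b, IsConj a b ∧ p b) :
    ∃ b, IsConj a b ∧ p b ∧ ∀ g, p (g * b * g⁻¹) → f b ≤ f (g * b * g⁻¹) := by
  obtain ⟨b, ⟨hab, hb⟩, hmin⟩ :=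
    exists_minimalFor_of_wellFoundedLT (fun b => IsConj a b ∧ p b) (fun b => (f b).toNat) h
  refine ⟨b, hab, hb, fun g hg => ?_⟩
  rcases le_total (f b) (f (g * b * g⁻¹)) with hle | hle
  · exact hle
  · have hnat : (f b).toNat ≤ (f (g * b * g⁻¹)).toNat :=
      hmin ⟨hab.trans (isConj_conj g b), hg⟩ (Int.toNat_le_toNat hle)
    linarith [Int.toNat_le.1 hnat, Int.toNat_of_nonneg (hf _ hg)]

end Group

lemma trace_eq_of_isConj {n R : Type*} [Fintype n] [DecidableEq n] [CommRing R]
    {A B : Matrix.SpecialLinearGroup n R} (h : IsConj A B) :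
    Matrix.trace (A : Matrix n n R) = Matrix.trace (B : Matrix n n R) := by
  obtain ⟨P, rfl⟩ := isConj_iff.1 h
  rw [Matrix.SpecialLinearGroup.coe_mul, Matrix.trace_mul_comm,
    ← Matrix.SpecialLinearGroup.coe_mul, ← mul_assoc P⁻¹ P A, inv_mul_cancel, one_mul]

lemma apply_mul_sub_apply_mul_eq_one {R : Type*} [CommRing R]
    (A : Matrix.SpecialLinearGroup (Fin 2) R) : A 0 0 * A 1 1 - A 0 1 * A 1 0 = 1 := by
  rw [← Matrix.det_fin_two, A.det_coe]

lemma coe_elemFactor (x y : ℤ) :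
    (elemFactor x y : Matrix (Fin 2) (Fin 2) ℤ) = !![1, x; y, 1 + x * y] := rfl

lemma coe_conj {R : Type*} [CommRing R] (P A : Matrix.SpecialLinearGroup (Fin 2) R) :
    ((P * A * P⁻¹ : Matrix.SpecialLinearGroup (Fin 2) R) : Matrix (Fin 2) (Fin 2) R) =
      !![P 0 0, P 0 1; P 1 0, P 1 1] * !![A 0 0, A 0 1; A 1 0, A 1 1] *
        !![P 1 1, -P 0 1; -P 1 0, P 0 0] := by
  rw [← Matrix.adjugate_fin_two_of, ← Matrix.eta_fin_two, ← Matrix.eta_fin_two,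
    Matrix.SpecialLinearGroup.coe_mul, Matrix.SpecialLinearGroup.coe_mul,
    Matrix.SpecialLinearGroup.coe_inv]

lemma coe_upper_conj (k : ℤ) (A : SL2Z) :
    ((elemFactor k 0 * A * (elemFactor k 0)⁻¹ : SL2Z) : Matrix (Fin 2) (Fin 2) ℤ) =
      !![A 0 0 + k * A 1 0, A 0 1 + k * A 1 1 - k * (A 0 0 + k * A 1 0);
        A 1 0, A 1 1 - k * A 1 0] := by
  rw [coe_conj, coe_elemFactor]
  ext i j
  fin_cases i <;> fin_cases j <;> simp <;> ring

lemma coe_lower_conj (k : ℤ) (A : SL2Z) :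
    ((elemFactor 0 k * A * (elemFactor 0 k)⁻¹ : SL2Z) : Matrix (Fin 2) (Fin 2) ℤ) =
      !![A 0 0 - k * A 0 1, A 0 1;
        A 1 0 + k * A 0 0 - k * (A 1 1 + k * A 0 1), A 1 1 + k * A 0 1] := by
  rw [coe_conj, coe_elemFactor]
  ext i j
  fin_cases i <;> fin_cases j <;> simp <;> ring

lemma coe_S_conj (A : SL2Z) :
    ((ModularGroup.S * A * ModularGroup.S⁻¹ : SL2Z) : Matrix (Fin 2) (Fin 2) ℤ) =
      !![A 1 1, -A 1 0; -A 0 1, A 0 0] := by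
  rw [coe_conj, ModularGroup.coe_S]
  ext i j
  fin_cases i <;> fin_cases j <;> simp

lemma coe_elemFactor_inv_mul (x y : ℤ) (A : SL2Z) :
    (((elemFactor x y)⁻¹ * A : SL2Z) : Matrix (Fin 2) (Fin 2) ℤ) =
      !![A 0 0 - x * (A 1 0 - y * A 0 0), A 0 1 - x * (A 1 1 - y * A 0 1);
        A 1 0 - y * A 0 0, A 1 1 - y * A 0 1] := by
  ext i j
  fin_cases i <;> fin_cases j <;>
    simp [coe_elemFactor, Matrix.mul_apply, Fin.sum_univ_two] <;> ring

lemma apply_mul_apply_ne_zero_of_two_lt_trace {A : SL2Z}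
    (hA : 2 < Matrix.trace (A : Matrix (Fin 2) (Fin 2) ℤ)) : A 0 1 * A 1 0 ≠ 0 := by
  intro h
  have hdet := apply_mul_sub_apply_mul_eq_one A
  rw [h, sub_zero] at hdet
  rw [Matrix.trace_fin_two] at hA
  rcases Int.eq_one_or_neg_one_of_mul_eq_one' hdet with ⟨ha, hd⟩ | ⟨ha, hd⟩ <;> omega

lemma exists_isConj_apply_zero_zero_pos {A : SL2Z}
    (hA : 0 < Matrix.trace (A : Matrix (Fin 2) (Fin 2) ℤ)) : ∃ B, IsConj A B ∧ 0 < B 0 0 := by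
  rw [Matrix.trace_fin_two] at hA
  rcases lt_or_ge 0 (A 0 0) with ha | ha
  · exact ⟨A, IsConj.refl A, ha⟩
  · refine ⟨_, isConj_conj ModularGroup.S A, ?_⟩
    simp only [coe_S_conj, Matrix.of_apply, Matrix.cons_val_zero]
    linarith

lemma exists_isConj_le_abs {A : SL2Z} (hA : 2 < Matrix.trace (A : Matrix (Fin 2) (Fin 2) ℤ)) :
    ∃ B, IsConj A B ∧ 0 < B 0 0 ∧ B 0 0 ≤ |B 0 1| ∧ B 0 0 ≤ |B 1 0| := by
  obtain ⟨B, hAB, ha, hmin⟩ := exists_isConj_forall_le_conj (f := fun B : SL2Z => B 0 0)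
    (fun _ => le_of_lt) (exists_isConj_apply_zero_zero_pos (by linarith))
  have hbc : B 0 1 * B 1 0 ≠ 0 :=
    apply_mul_apply_ne_zero_of_two_lt_trace (trace_eq_of_isConj hAB ▸ hA)
  refine ⟨B, hAB, ha, ?_, ?_⟩
  · by_contra! hlt
    have h := hmin (elemFactor 0 (B 0 1).sign)
    simp only [coe_lower_conj, Matrix.of_apply, Matrix.cons_val_zero,
      Int.sign_mul_self_eq_abs] at h
    linarith [h (by linarith), abs_pos.2 (left_ne_zero_of_mul hbc)]
  · by_contra! hlt
    have h := hmin (elemFactor (-(B 1 0).sign) 0)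
    simp only [coe_upper_conj, Matrix.of_apply, Matrix.cons_val_zero, neg_mul,
      Int.sign_mul_self_eq_abs] at h
    linarith [h (by linarith), abs_pos.2 (right_ne_zero_of_mul hbc)]

lemma exists_isConj_pos {A : SL2Z} (hA : 2 < Matrix.trace (A : Matrix (Fin 2) (Fin 2) ℤ)) :
    ∃ B, IsConj A B ∧ ∀ i j, 0 < B i j := by
  obtain ⟨B, hAB, ha, hab, hac⟩ := exists_isConj_le_abs hA
  have hdet := apply_mul_sub_apply_mul_eq_one B
  rw [trace_eq_of_isConj hAB, Matrix.trace_fin_two] at hA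
  have hbc : 0 < B 0 1 * B 1 0 := by
    by_contra! hbc
    have hsq : B 0 0 * B 0 0 ≤ -(B 0 1 * B 1 0) := by
      rw [← abs_of_nonpos hbc, abs_mul]
      exact mul_le_mul hab hac ha.le (abs_nonneg _)
    nlinarith
  have hd : 0 < B 1 1 := pos_of_mul_pos_right (by linarith) ha.le
  rcases pos_and_pos_or_neg_and_neg_of_mul_pos hbc with ⟨hb, hc⟩ | ⟨hb, hc⟩
  · exact ⟨B, hAB, Fin.forall_fin_two.2
      ⟨Fin.forall_fin_two.2 ⟨ha, hb⟩, Fin.forall_fin_two.2 ⟨hc, hd⟩⟩⟩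
  · refine ⟨_, hAB.trans (isConj_conj ModularGroup.S B), ?_⟩
    rw [coe_S_conj]
    simp [Fin.forall_fin_two, *]

/-- A matrix of `SL(2, ℤ)` whose top left entry is positive and at most each off-diagonal entry.
These are exactly the products of one or more blocks `L^y R^x` with `x, y > 0`; Euclid's algorithm
on the first column reads off the exponents. -/
structure IsReduced (A : SL2Z) : Prop where
  pos : 0 < A 0 0
  le_upper : A 0 0 ≤ A 0 1
  le_lower : A 0 0 ≤ A 1 0

lemma le_of_mul_sub_mul_eq_one {a b c d : ℤ} (h : a * d - b * c = 1) (hb : 0 < b)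
    (hc : 0 ≤ c) (hca : c < a) : d ≤ b := by
  by_contra! hbd
  nlinarith

lemma exists_isConj_isReduced {A : SL2Z} (hA : ∀ i j, 0 < A i j) :
    ∃ B, IsConj A B ∧ IsReduced B := by
  obtain ⟨B, hAB, hB, hmin⟩ := exists_isConj_forall_le_conj (f := fun B : SL2Z => B 0 0)
    (p := fun B => ∀ i j, 0 < B i j) (fun _ hB => (hB 0 0).le) ⟨A, IsConj.refl A, hA⟩
  have hdet := apply_mul_sub_apply_mul_eq_one B
  refine ⟨B, hAB, hB 0 0, ?_, ?_⟩
  · by_contra! hba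
    have hdc : B 1 1 ≤ B 1 0 :=
      le_of_mul_sub_mul_eq_one (by linarith) (hB 1 0) (hB 0 1).le hba
    have h := hmin (elemFactor 0 1)
    simp only [coe_lower_conj, Fin.forall_fin_two, Matrix.of_apply, Matrix.cons_val_zero,
      Matrix.cons_val_one] at h
    linarith [hB 0 1, h ⟨⟨by linarith, hB 0 1⟩, by linarith, by linarith [hB 0 1, hB 1 1]⟩]
  · by_contra! hca
    have hdb : B 1 1 ≤ B 0 1 := le_of_mul_sub_mul_eq_one hdet (hB 0 1) (hB 1 0).le hca
    have h := hmin (elemFactor (-1) 0)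
    simp only [coe_upper_conj, Fin.forall_fin_two, Matrix.of_apply, Matrix.cons_val_zero,
      Matrix.cons_val_one] at h
    linarith [hB 1 0, h ⟨⟨by linarith, by linarith⟩, hB 1 0, by linarith [hB 1 0, hB 1 1]⟩]

lemma eq_elemFactor_of_apply_zero_zero_eq_one {A : SL2Z} (h : A 0 0 = 1) :
    A = elemFactor (A 0 1) (A 1 0) := by
  have hdet := apply_mul_sub_apply_mul_eq_one A
  have hd : A 1 1 = 1 + A 0 1 * A 1 0 := by
    rw [h] at hdet
    linarith
  ext i j
  fin_cases i <;> fin_cases j <;> simp [coe_elemFactor, h, hd]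

lemma IsReduced.exists_eq_elemFactor_mul {A : SL2Z} (hA : IsReduced A) (h : A 0 0 ≠ 1) :
    ∃ x y B, 0 < x ∧ 0 < y ∧ IsReduced B ∧ B 0 0 < A 0 0 ∧ A = elemFactor x y * B := by
  obtain ⟨ha, hab, hac⟩ := hA
  have hdet := apply_mul_sub_apply_mul_eq_one A
  obtain ⟨y, r, hr, hra, hc⟩ : ∃ y r, 0 ≤ r ∧ r < A 0 0 ∧ A 1 0 - y * A 0 0 = r :=
    ⟨A 1 0 / A 0 0, A 1 0 % A 0 0, Int.emod_nonneg _ ha.ne', Int.emod_lt_of_pos _ ha,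
      by linarith [Int.ediv_mul_add_emod (A 1 0) (A 0 0)]⟩
  have hy : 0 < y := by
    by_contra! hy
    nlinarith
  have hdet' : A 0 0 * (A 1 1 - y * A 0 1) - A 0 1 * r = 1 := by
    linear_combination hdet + A 0 1 * hc
  have hr_pos : 0 < r := by
    refine hr.lt_of_ne ?_
    rintro rfl
    rw [mul_zero, sub_zero] at hdet'
    exact h (Int.eq_one_of_mul_eq_one_right ha.le hdet')
  have hrd : r < A 1 1 - y * A 0 1 := by
    by_contra! hdr
    nlinarith
  obtain ⟨x, s, hs, hsr, hxs⟩ : ∃ x s, 0 < s ∧ s ≤ r ∧ A 0 0 - x * r = s :=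
    ⟨(A 0 0 - 1) / r, (A 0 0 - 1) % r + 1, by linarith [Int.emod_nonneg (A 0 0 - 1) hr_pos.ne'],
      Int.emod_lt_of_pos _ hr_pos, by linarith [Int.ediv_mul_add_emod (A 0 0 - 1) r]⟩
  have hx : 0 < x := by
    by_contra! hx
    nlinarith
  have hsb : s ≤ A 0 1 - x * (A 1 1 - y * A 0 1) := by
    have hdet_s : s * (A 1 1 - y * A 0 1) - (A 0 1 - x * (A 1 1 - y * A 0 1)) * r = 1 := by
      linear_combination hdet' - (A 1 1 - y * A 0 1) * hxs
    by_contra! hbs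
    nlinarith [hdet_s, hrd]
  refine ⟨x, y, (elemFactor x y)⁻¹ * A, hx, hy, ⟨?_, ?_, ?_⟩, ?_, (mul_inv_cancel_left _ _).symm⟩
  all_goals
    simp only [coe_elemFactor_inv_mul, Matrix.of_apply, Matrix.cons_val_zero,
      Matrix.cons_val_one, hc, hxs]
  exacts [hs, hsb, hsr, hsr.trans_lt hra]

/-- `A` is a product of one or more blocks `L^y R^x` with `x, y > 0`. The exponents are families
indexed by `Fin n`, with `a` those of `R` and `b` those of `L`. -/
def IsBlockProduct (A : SL2Z) : Prop :=
  ∃ n : ℕ, 1 ≤ n ∧ ∃ a b : Fin n → ℤ, (∀ k, 0 < a k) ∧ (∀ k, 0 < b k) ∧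
    A = (List.ofFn fun k => elemFactor (a k) (b k)).prod

lemma isBlockProduct_elemFactor {x y : ℤ} (hx : 0 < x) (hy : 0 < y) :
    IsBlockProduct (elemFactor x y) :=
  ⟨1, le_rfl, fun _ => x, fun _ => y, fun _ => hx, fun _ => hy, by simp⟩

lemma IsBlockProduct.elemFactor_mul {x y : ℤ} (hx : 0 < x) (hy : 0 < y) {A : SL2Z}
    (hA : IsBlockProduct A) : IsBlockProduct (elemFactor x y * A) := by
  obtain ⟨n, -, a, b, ha, hb, rfl⟩ := hA
  exact ⟨n + 1, n.succ_pos, Fin.cons x a, Fin.cons y b, Fin.cases hx ha, Fin.cases hy hb,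
    by simp [List.ofFn_succ]⟩

lemma IsReduced.isBlockProduct {A : SL2Z} (hA : IsReduced A) : IsBlockProduct A := by
  induction hN : (A 0 0).toNat using Nat.strong_induction_on generalizing A with
  | _ N ih =>
    by_cases h : A 0 0 = 1
    · rw [eq_elemFactor_of_apply_zero_zero_eq_one h]
      exact isBlockProduct_elemFactor (hA.pos.trans_le hA.le_upper) (hA.pos.trans_le hA.le_lower)
    · obtain ⟨x, y, B, hx, hy, hB, hlt, rfl⟩ := hA.exists_eq_elemFactor_mul h
      exact (ih _ (hN ▸ (Int.toNat_lt_toNat hA.pos).2 hlt) hB rfl).elemFactor_mul hx hy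

lemma exists_isConj_isBlockProduct {A : SL2Z}
    (hA : 2 < Matrix.trace (A : Matrix (Fin 2) (Fin 2) ℤ)) :
    ∃ B, IsConj A B ∧ IsBlockProduct B := by
  obtain ⟨B, hAB, hB⟩ := exists_isConj_pos hA
  obtain ⟨C, hBC, hC⟩ := exists_isConj_isReduced hB
  exact ⟨C, hAB.trans hBC, hC.isBlockProduct⟩

lemma elemFactor_zero_mul_elemFactor_zero (x y : ℤ) :
    elemFactor 0 y * elemFactor x 0 = elemFactor x y := by
  ext i j
  fin_cases i <;> fin_cases j <;> simp [coe_elemFactor, mul_comm, add_comm]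

lemma Rmat_zpow (x : ℤ) : Rmat ^ x = elemFactor x 0 := by
  have hR : Rmat = ModularGroup.T := rfl
  ext1
  rw [hR, ModularGroup.coe_T_zpow, coe_elemFactor, mul_zero, add_zero]

lemma S_conj_upper (x : ℤ) :
    ModularGroup.S * elemFactor x 0 * ModularGroup.S⁻¹ = elemFactor 0 (-x) := by
  ext1
  rw [coe_S_conj]
  simp [coe_elemFactor]

lemma Lmat_zpow (y : ℤ) : Lmat ^ y = elemFactor 0 y := by
  have hL : Lmat = ModularGroup.S * Rmat⁻¹ * ModularGroup.S⁻¹ := by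
    rw [← zpow_neg_one, Rmat_zpow, S_conj_upper, neg_neg, Lmat]
  rw [hL, conj_zpow, inv_zpow', Rmat_zpow, S_conj_upper, neg_neg]

/-- Every `A ∈ SL(2, ℤ)` with `tr A > 2` is conjugate in `SL(2, ℤ)` to a product
`[[1, m₂ₙ₋₁], [m₂ₙ, 1 + m₂ₙ₋₁ m₂ₙ]] ⋯ [[1, m₁], [m₂, 1 + m₁ m₂]]` with `n ≥ 1` and all
`mᵢ` positive; equivalently to `L^{m₂ₙ} R^{m₂ₙ₋₁} ⋯ L^{m₂} R^{m₁}`.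
(Here `a k = m_{2k-1}` and `b k = m_{2k}` for the `k`-th factor.) -/
theorem statement_19 (A : SL2Z)
    (hA : 2 < Matrix.trace (A : Matrix (Fin 2) (Fin 2) ℤ)) :
    ∃ (n : ℕ), 1 ≤ n ∧ ∃ a b : Fin n → ℤ,
      (∀ k, 0 < a k) ∧ (∀ k, 0 < b k) ∧
      (∃ P : SL2Z,
        A = P * (List.ofFn fun k => elemFactor (a k) (b k)).prod * P⁻¹) ∧
      (List.ofFn fun k => elemFactor (a k) (b k)).prod =
        (List.ofFn fun k => Lmat ^ (b k) * Rmat ^ (a k)).prod := by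
  obtain ⟨B, hAB, n, hn, a, b, ha, hb, rfl⟩ := exists_isConj_isBlockProduct hA
  obtain ⟨P, hP⟩ := isConj_iff.1 hAB.symm
  exact ⟨n, hn, a, b, ha, hb, ⟨P, hP.symm⟩,
    by simp only [Lmat_zpow, Rmat_zpow, elemFactor_zero_mul_elemFactor_zero]⟩

end SL2Conj
end
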